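/- arXiv:2301.13200 — 9 statements merged into one kernel-verified Lean document; each statement's English description precedes it below -/
import Mathlib

section
/- Let r > 0 and let g : ℂ → ℂ be holomorphic on {z ∈ ℂ : |z| > r}, satisfy g(conj z) = conj(g z) for all |z| > r, and satisfy g(z) − z → 0 as |z| → ∞ (along the cobounded filter on ℂ). Let R > r and let u ∈ ℂ with u ∉ g({z : |z| ≥ R}). Then (1/π) ∫_{θ=0}^{π} G(u, g(R·exp(iθ))) dθ = −2·log R. -/
/-- The free-boundary Green function of the upper half-plane (without
normalization at infinity): `G(z,w) = −log|z−w| − log|z − conj w|`. -/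
noncomputable def greenG (z w : ℂ) : ℝ :=
  -Real.log ‖z - w‖ - Real.log ‖z - (starRingEnd ℂ) w‖

/-- First claim of Lemma 4.3: for the Schwarz-reflection extension `g` of a
hydrodynamically normalized conformal map `ℍ → ℍ∖K` (with `K ⊆ {|z| ≤ r}`),
the average of `G(u, g(·))` over the semicircle of radius `R > r` equals
`−2 log R`, provided `u ∉ g({|z| ≥ R})`. -/
theorem green_avg_semicircle_infinity (r R : ℝ) (hr : 0 < r) (hR : r < R)
    (g : ℂ → ℂ)
    (hg : DifferentiableOn ℂ g {z : ℂ | r < ‖z‖})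
    (hsym : ∀ z : ℂ, r < ‖z‖ → g ((starRingEnd ℂ) z) = (starRingEnd ℂ) (g z))
    (hnorm : Filter.Tendsto (fun z => g z - z) (Bornology.cobounded ℂ) (nhds 0))
    (u : ℂ) (hu : u ∉ g '' {z : ℂ | R ≤ ‖z‖}) :
    (1 / Real.pi) * ∫ θ in (0:ℝ)..Real.pi,
        greenG u (g ((R : ℂ) * Complex.exp ((θ : ℂ) * Complex.I)))
      = -2 * Real.log R := by
  have hR0 : 0 < R := hr.trans hR
  have hne : ∀ z : ℂ, R ≤ ‖z‖ → g z - u ≠ 0 := fun z hz h => hu ⟨z, hz, sub_eq_zero.mp h⟩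
  set h : ℂ → ℂ := fun w => if w = 0 then 1 else w * (g w⁻¹ - u) with hh
  have hopen : IsOpen {z : ℂ | r < ‖z‖} := isOpen_lt continuous_const continuous_norm
  have hinv : ∀ w : ℂ, w ≠ 0 → ‖w‖ ≤ R⁻¹ → R ≤ ‖w⁻¹‖ := by
    intro w hw hwR
    rw [norm_inv]
    exact (le_inv_comm₀ hR0 (norm_pos_iff.mpr hw)).mpr hwR
  have hdiff : ∀ w : ℂ, w ≠ 0 → ‖w‖ ≤ R⁻¹ → DifferentiableAt ℂ h w := by
    intro w hw hwR
    have h1 : DifferentiableAt ℂ g w⁻¹ :=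
      hg.differentiableAt (hopen.mem_nhds (hR.trans_le (hinv w hw hwR)))
    have h2 : DifferentiableAt ℂ (fun w => w * (g w⁻¹ - u)) w := by
      have h3 : DifferentiableAt ℂ (fun w : ℂ => g w⁻¹) w :=
        DifferentiableAt.comp w h1 (differentiableAt_inv hw)
      exact differentiableAt_id.mul (h3.sub_const u)
    refine h2.congr_of_eventuallyEq ?_
    filter_upwards [isOpen_ne.mem_nhds hw] with x hx
    have hx : x ≠ 0 := hx
    simp [hh, hx]
  have hcont : ContinuousAt h 0 := by
    rw [continuousAt_iff_punctured_nhds]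
    have h0 : h 0 = 1 := by simp [hh]
    rw [h0]
    have t1 : Filter.Tendsto (fun w : ℂ => g w⁻¹ - w⁻¹) (nhdsWithin 0 {0}ᶜ) (nhds 0) :=
      hnorm.comp Filter.tendsto_inv₀_nhdsNE_zero
    have t2 : Filter.Tendsto (fun w : ℂ => w) (nhdsWithin 0 {0}ᶜ) (nhds 0) :=
      Filter.tendsto_id.mono_left nhdsWithin_le_nhds
    have t3 : Filter.Tendsto (fun w : ℂ => 1 + w * ((g w⁻¹ - w⁻¹) - u))
        (nhdsWithin 0 {0}ᶜ) (nhds 1) := by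
      simpa using (t2.mul (t1.sub_const u)).const_add 1
    refine t3.congr' ?_
    filter_upwards [self_mem_nhdsWithin] with x hx
    have hx : x ≠ 0 := hx
    simp only [hh, hx, if_false]
    field_simp
    ring
  have hRi : 0 < R⁻¹ := inv_pos.mpr hR0
  have hev : ∀ᶠ z in nhdsWithin (0 : ℂ) {0}ᶜ, ‖z‖ < R⁻¹ := by
    refine nhdsWithin_le_nhds ?_
    filter_upwards [Metric.ball_mem_nhds (0 : ℂ) hRi] with z hz
    simpa using hz
  have han : AnalyticOnNhd ℂ h (Metric.closedBall 0 |R⁻¹|) := by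
    intro w hw
    rw [abs_of_pos hRi, mem_closedBall_zero_iff] at hw
    refine Complex.analyticAt_of_differentiable_on_punctured_nhds_of_continuousAt ?_ ?_
    · by_cases hw0 : w = 0
      · subst hw0
        filter_upwards [hev, self_mem_nhdsWithin] with z hz hz0
        exact hdiff z hz0 hz.le
      · have hw' : r < ‖w⁻¹‖ := hR.trans_le (hinv w hw0 hw)
        have c : ContinuousAt (fun z : ℂ => ‖z⁻¹‖) w := (continuousAt_inv₀ hw0).norm
        refine nhdsWithin_le_nhds ?_
        filter_upwards [c.eventually (lt_mem_nhds hw'), isOpen_ne.mem_nhds hw0] with z hz hz0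
        have hz0 : z ≠ 0 := hz0
        have h1 : DifferentiableAt ℂ g z⁻¹ := hg.differentiableAt (hopen.mem_nhds hz)
        have h3 : DifferentiableAt ℂ (fun w : ℂ => g w⁻¹) z :=
          DifferentiableAt.comp z h1 (differentiableAt_inv hz0)
        refine (differentiableAt_id.mul (h3.sub_const u)).congr_of_eventuallyEq ?_
        filter_upwards [isOpen_ne.mem_nhds hz0] with x hx
        have hx : x ≠ 0 := hx
        simp [hh, hx]
    · by_cases hw0 : w = 0
      · rw [hw0]; exact hcont
      · exact (hdiff w hw0 hw).continuousAt
  have hnz : ∀ w ∈ Metric.closedBall (0 : ℂ) |R⁻¹|, h w ≠ 0 := by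
    intro w hw
    rw [abs_of_pos hRi, mem_closedBall_zero_iff] at hw
    by_cases hw0 : w = 0
    · simp [hh, hw0]
    · simpa [hh, hw0] using hne _ (hinv w hw0 hw)
  have key := AnalyticOnNhd.circleAverage_log_norm_of_ne_zero han hnz
  set f : ℝ → ℝ := fun θ =>
    Real.log ‖u - g ((R : ℂ) * Complex.exp ((θ : ℂ) * Complex.I))‖ with hf
  have hnR : ∀ θ : ℝ, ‖(R : ℂ) * Complex.exp ((θ : ℂ) * Complex.I)‖ = R := by
    intro θ
    rw [norm_mul, Complex.norm_exp_ofReal_mul_I, mul_one, Complex.norm_real, Real.norm_eq_abs,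
      abs_of_pos hR0]
  have hne' : ∀ θ : ℝ, ‖u - g ((R : ℂ) * Complex.exp ((θ : ℂ) * Complex.I))‖ ≠ 0 := by
    intro θ
    rw [norm_ne_zero_iff, ← neg_sub, neg_ne_zero]
    exact hne _ (hnR θ).ge
  have hfc : Continuous f := by
    have hgc : Continuous (fun θ : ℝ => g ((R : ℂ) * Complex.exp ((θ : ℂ) * Complex.I))) :=
      hg.continuousOn.comp_continuous (by fun_prop) (fun θ => by
        show r < _
        rw [hnR]; exact hR)
    exact (continuous_const.sub hgc).norm.log hne'
  have hper : Function.Periodic f (2 * Real.pi) := by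
    intro θ
    have : Complex.exp (((θ + 2 * Real.pi : ℝ) : ℂ) * Complex.I)
        = Complex.exp ((θ : ℂ) * Complex.I) := by
      push_cast
      rw [add_mul, Complex.exp_add, Complex.exp_two_pi_mul_I, mul_one]
    simp only [hf, this]
  have hcirc : ∀ θ : ℝ, Real.log ‖h (circleMap 0 R⁻¹ θ)‖ = -Real.log R + f (-θ) := by
    intro θ
    have e0 : circleMap 0 R⁻¹ θ ≠ 0 := circleMap_ne_center hRi.ne'
    have e1 : (circleMap 0 R⁻¹ θ)⁻¹ = (R : ℂ) * Complex.exp (((-θ : ℝ) : ℂ) * Complex.I) := by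
      simp only [circleMap, zero_add, mul_inv, Complex.ofReal_inv, inv_inv, ← Complex.exp_neg]
      push_cast
      rw [neg_mul]
    have e2 : ‖circleMap 0 R⁻¹ θ‖ = R⁻¹ := by
      rw [norm_circleMap_zero, abs_of_pos hRi]
    simp only [hh, e0, if_false, hf]
    rw [norm_mul, e2, e1, norm_sub_rev, Real.log_mul hRi.ne' (hne' _), Real.log_inv]
  have h0 : h 0 = 1 := by simp [hh]
  rw [Real.circleAverage_def, h0, norm_one, Real.log_one] at key
  simp only [hcirc, smul_eq_mul] at key
  have hfn : Continuous (fun θ : ℝ => f (-θ)) := hfc.comp continuous_neg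
  rw [intervalIntegral.integral_add (by simp) (hfn.intervalIntegrable _ _),
    intervalIntegral.integral_const, smul_eq_mul,
    intervalIntegral.integral_comp_neg (fun x => f x)] at key
  have hI := hper.intervalIntegral_add_eq (-(2 * Real.pi)) (-Real.pi)
  have a1 : -(2 * Real.pi) + 2 * Real.pi = -0 := by ring
  have a2 : -Real.pi + 2 * Real.pi = Real.pi := by ring
  rw [a1, a2, ← intervalIntegral.integral_add_adjacent_intervals
    (hfc.intervalIntegrable (-Real.pi) 0) (hfc.intervalIntegrable 0 Real.pi)] at hI
  have hneg := intervalIntegral.integral_comp_neg (a := 0) (b := Real.pi) (fun x => f x)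
  rw [neg_zero] at hneg
  have hgreen : ∀ θ : ℝ, greenG u (g ((R : ℂ) * Complex.exp ((θ : ℂ) * Complex.I)))
      = -f θ - f (-θ) := by
    intro θ
    have e : (R : ℂ) * Complex.exp (((-θ : ℝ) : ℂ) * Complex.I)
        = (starRingEnd ℂ) ((R : ℂ) * Complex.exp ((θ : ℂ) * Complex.I)) := by
      rw [map_mul, ← Complex.exp_conj, map_mul, Complex.conj_I, Complex.conj_ofReal,
        Complex.conj_ofReal]
      push_cast
      rw [neg_mul, mul_neg]
    simp only [greenG, hf]
    rw [e, hsym _ (by rw [hnR]; exact hR)]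
  simp only [hgreen]
  have hfg : Continuous (fun θ : ℝ => -f θ) := hfc.neg
  rw [intervalIntegral.integral_sub (hfg.intervalIntegrable _ _)
    (hfn.intervalIntegrable _ _), intervalIntegral.integral_neg, hneg]
  rw [hI] at key
  have hpi := Real.pi_pos.ne'
  field_simp at key ⊢
  linarith
end

section
/- Let r > 0 and let g : ℂ → ℂ be holomorphic and injective on {z ∈ ℂ : |z| > r}, satisfy g(conj z) = conj(g z) for all |z| > r, and satisfy g(z) − z → 0 as |z| → ∞ (along the cobounded filter on ℂ). Let R > r. Then (1/π) ∫_{θ=0}^{π} log|g'(R·exp(iθ))| dθ = 0, where g' denotes the complex derivative of g. -/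
open Filter Topology Metric in
lemma aux_deriv_ne_zero {f : ℂ → ℂ} {z₀ : ℂ} {S : Set ℂ} (hS : S ∈ 𝓝 z₀)
    (hf : AnalyticAt ℂ f z₀) (hinj : Set.InjOn f S) : deriv f z₀ ≠ 0 := by
  intro hd
  have hf1 : AnalyticAt ℂ (fun z => f z - f z₀) z₀ := hf.sub analyticAt_const
  have hnc : ¬ ∀ᶠ z in 𝓝 z₀, f z - f z₀ = 0 := by
    intro h
    have h2 : ∀ᶠ z in 𝓝[≠] z₀, f z - f z₀ = 0 ∧ z ∈ S ∧ z ≠ z₀ :=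
      (h.filter_mono nhdsWithin_le_nhds).and
        ((eventually_of_mem (mem_nhdsWithin_of_mem_nhds hS) (fun _ h => h)).and
          self_mem_nhdsWithin)
    obtain ⟨z, h0, hz, hne⟩ := h2.exists
    exact hne (hinj hz (mem_of_mem_nhds hS) (sub_eq_zero.mp h0))
  obtain ⟨n, u, hu, hu0, hfu⟩ := hf1.exists_eventuallyEq_pow_smul_nonzero_iff.mpr hnc
  have hn0 : n ≠ 0 := by
    rintro rfl
    have := hfu.self_of_nhds
    simp at this
    exact hu0 this.symm
  have hn1 : n ≠ 1 := by
    rintro rfl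
    have h1 : HasDerivAt (fun z => (z - z₀) ^ 1 • u z) (u z₀) z₀ := by
      have := ((hasDerivAt_id z₀).sub_const z₀).fun_mul hu.differentiableAt.hasDerivAt
      simpa using this
    have h2 : HasDerivAt (fun z => f z - f z₀) (u z₀) z₀ := h1.congr_of_eventuallyEq hfu
    have h3 : HasDerivAt (fun z => f z - f z₀) (deriv f z₀) z₀ :=
      hf.differentiableAt.hasDerivAt.sub_const _
    exact hu0 ((h2.unique h3).trans hd)
  have hnC : (n : ℂ) ≠ 0 := by exact_mod_cast hn0
  set a := u z₀ with ha
  let c : ℂ := Complex.exp (Complex.log a / n)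
  have hc : c ^ n = a := by
    simp only [c]
    rw [← Complex.exp_nat_mul, mul_div_cancel₀ _ hnC, Complex.exp_log hu0]
  let v : ℂ → ℂ := fun z => c * Complex.exp (Complex.log (u z / a) / n)
  have hua : AnalyticAt ℂ (fun z => u z / a) z₀ := hu.div analyticAt_const hu0
  have hv : AnalyticAt ℂ v z₀ := by
    refine analyticAt_const.mul ?_
    refine AnalyticAt.cexp ?_
    refine AnalyticAt.div ?_ analyticAt_const hnC
    refine hua.clog ?_
    rw [← ha, div_self hu0]
    simp
  have hv0 : v z₀ ≠ 0 := mul_ne_zero (Complex.exp_ne_zero _) (Complex.exp_ne_zero _)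
  have hvn : ∀ᶠ z in 𝓝 z₀, v z ^ n = u z := by
    filter_upwards [hu.continuousAt.eventually_ne hu0] with z hz
    simp only [v]
    rw [mul_pow, hc, ← Complex.exp_nat_mul, mul_div_cancel₀ _ hnC,
      Complex.exp_log (div_ne_zero hz hu0), mul_div_cancel₀ _ hu0]
  let φ : ℂ → ℂ := fun z => (z - z₀) * v z
  have hφ : AnalyticAt ℂ φ z₀ := (analyticAt_id.sub analyticAt_const).mul hv
  have hφd : HasDerivAt φ (v z₀) z₀ := by
    have := ((hasDerivAt_id z₀).sub_const z₀).fun_mul hv.differentiableAt.hasDerivAt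
    simpa [φ] using this
  have hφs : HasStrictDerivAt φ (v z₀) z₀ := by
    have := hφ.hasStrictDerivAt
    rwa [hφd.deriv] at this
  have hmap : map φ (𝓝 z₀) = 𝓝 0 := by
    have := hφs.map_nhds_eq hv0
    simpa [φ] using this
  have hP : ∀ᶠ z in 𝓝 z₀, z ∈ S ∧ f z - f z₀ = φ z ^ n := by
    filter_upwards [hS, hvn, hfu] with z h1 h2 h3
    refine ⟨h1, ?_⟩
    simp only [φ]
    rw [h3, mul_pow, h2, smul_eq_mul]
  have hQ : ∀ᶠ w in 𝓝 (0:ℂ), ∃ z, (z ∈ S ∧ f z - f z₀ = φ z ^ n) ∧ φ z = w := by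
    rw [← hmap]
    have : φ '' {z | z ∈ S ∧ f z - f z₀ = φ z ^ n} ∈ map φ (𝓝 z₀) := image_mem_map hP
    exact this
  let ζ : ℂ := Complex.exp (2 * Real.pi * Complex.I / n)
  have hζ : IsPrimitiveRoot ζ n := Complex.isPrimitiveRoot_exp n hn0
  have hQ' : ∀ᶠ w in 𝓝 (0:ℂ), ∃ z, (z ∈ S ∧ f z - f z₀ = φ z ^ n) ∧ φ z = ζ * w := by
    have ht : Tendsto (fun w : ℂ => ζ * w) (𝓝 0) (𝓝 0) := by
      have : Continuous (fun w : ℂ => ζ * w) := by fun_prop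
      simpa using this.tendsto 0
    exact ht.eventually hQ
  have h2 : ∀ᶠ w in 𝓝[≠] (0:ℂ), _ :=
    ((hQ.and hQ').filter_mono nhdsWithin_le_nhds).and self_mem_nhdsWithin
  obtain ⟨w, ⟨⟨z, ⟨hz, hfz⟩, hzw⟩, ⟨z', ⟨hz', hfz'⟩, hzw'⟩⟩, hw⟩ := h2.exists
  have hw : w ≠ 0 := hw
  have : f z = f z' := by
    have : f z - f z₀ = f z' - f z₀ := by
      rw [hfz, hfz', hzw, hzw', mul_pow, hζ.pow_eq_one, one_mul]
    simpa using this
  have hzz := hinj hz hz' this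
  subst hzz
  have h1 : ζ * w = 1 * w := by rw [← hzw', hzw, one_mul]
  exact hζ.ne_one (by omega) (mul_right_cancel₀ hw h1)

open Filter Topology Metric in
lemma aux_deriv_tendsto {g : ℂ → ℂ} {r : ℝ}
    (hg : DifferentiableOn ℂ g {z : ℂ | r < ‖z‖})
    (hnorm : Tendsto (fun z => g z - z) (Bornology.cobounded ℂ) (𝓝 0)) :
    Tendsto (deriv g) (Bornology.cobounded ℂ) (𝓝 1) := by
  have hopen : IsOpen {z : ℂ | r < ‖z‖} := isOpen_lt continuous_const continuous_norm
  rw [Metric.tendsto_nhds]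
  intro ε hε
  have h1 := (Metric.tendsto_nhds.mp hnorm) (ε / 2) (by positivity)
  rw [← comap_norm_atTop, eventually_comap] at h1
  obtain ⟨N, hN⟩ := eventually_atTop.mp h1
  have h2 : ∀ᶠ z : ℂ in Bornology.cobounded ℂ, max N r + 2 ≤ ‖z‖ := by
    rw [← comap_norm_atTop]
    exact (eventually_ge_atTop _).comap _
  filter_upwards [h2] with z hz
  have hb : ∀ w ∈ closedBall z 1, max N r + 1 ≤ ‖w‖ := by
    intro w hw
    have h3 : ‖z‖ - ‖w‖ ≤ 1 := by
      refine (norm_sub_norm_le z w).trans ?_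
      rw [← dist_eq_norm, dist_comm]; exact hw
    linarith
  have hmem : ∀ w ∈ closedBall z 1, r < ‖w‖ := fun w hw => by
    have := hb w hw
    have := le_max_right N r
    linarith
  have hdiff : DifferentiableOn ℂ (fun z => g z - z) (closedBall z 1) :=
    (hg.mono hmem).sub differentiableOn_id
  have hest : ‖deriv (fun z => g z - z) z‖ ≤ (ε / 2) / 1 := by
    refine Complex.norm_deriv_le_of_forall_mem_sphere_norm_le one_pos
      (DifferentiableOn.diffContOnCl ?_) ?_
    · rw [closure_ball z one_ne_zero]; exact hdiff
    · intro w hw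
      have h4 := hb w (sphere_subset_closedBall hw)
      have h5 := hN ‖w‖ (by have := le_max_left N r; linarith) w rfl
      rw [dist_zero_right] at h5
      exact h5.le
  have hgz : DifferentiableAt ℂ g z :=
    hg.differentiableAt (hopen.mem_nhds (hmem z (mem_closedBall_self zero_le_one)))
  have hd : deriv (fun z => g z - z) z = deriv g z - 1 :=
    (hgz.hasDerivAt.sub (hasDerivAt_id z)).deriv
  rw [hd] at hest
  rw [dist_eq_norm]
  linarith


/-- Second claim of Lemma 4.3: for the Schwarz-reflection extension `g`
(holomorphic and injective on `{|z| > r}`, commuting with conjugation, with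
hydrodynamic normalization `g(z) − z → 0` at `∞`), the average of `log|g'|`
over the semicircle of radius `R > r` vanishes. -/
theorem log_deriv_avg_semicircle_zero (r R : ℝ) (hr : 0 < r) (hR : r < R)
    (g : ℂ → ℂ)
    (hg : DifferentiableOn ℂ g {z : ℂ | r < ‖z‖})
    (hinj : Set.InjOn g {z : ℂ | r < ‖z‖})
    (hsym : ∀ z : ℂ, r < ‖z‖ → g ((starRingEnd ℂ) z) = (starRingEnd ℂ) (g z))
    (hnorm : Filter.Tendsto (fun z => g z - z) (Bornology.cobounded ℂ) (nhds 0)) :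
    (1 / Real.pi) * ∫ θ in (0:ℝ)..Real.pi,
        Real.log ‖deriv g ((R : ℂ) * Complex.exp ((θ : ℂ) * Complex.I))‖
      = 0 := by
  have hR0 : 0 < R := hr.trans hR
  have hopen : IsOpen {z : ℂ | r < ‖z‖} := isOpen_lt continuous_const continuous_norm
  have hgA : AnalyticOnNhd ℂ g {z : ℂ | r < ‖z‖} := hg.analyticOnNhd hopen
  have hgA' : AnalyticOnNhd ℂ (deriv g) {z : ℂ | r < ‖z‖} := hgA.deriv
  have hne : ∀ z : ℂ, r < ‖z‖ → deriv g z ≠ 0 := fun z hz =>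
    aux_deriv_ne_zero (hopen.mem_nhds hz) (hgA z hz) hinj
  have hlim := aux_deriv_tendsto hg hnorm
  -- symmetry of the derivative
  have hsymd : ∀ z : ℂ, r < ‖z‖ →
      ‖deriv g ((starRingEnd ℂ) z)‖ = ‖deriv g z‖ := by
    intro z hz
    have h1 := (hgA z hz).differentiableAt.hasDerivAt.conj_conj
    have hz' : r < ‖(starRingEnd ℂ) z‖ := by rwa [RCLike.norm_conj]
    have h2 : g =ᶠ[nhds ((starRingEnd ℂ) z)] (starRingEnd ℂ ∘ g ∘ starRingEnd ℂ) := by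
      filter_upwards [hopen.mem_nhds hz'] with w hw
      simp only [Function.comp]
      rw [hsym w hw, Complex.conj_conj]
    have h3 := (h1.congr_of_eventuallyEq h2).deriv
    rw [h3, RCLike.norm_conj]
  -- inversion
  let F : ℂ → ℂ := Function.update (fun w => deriv g w⁻¹) 0 1
  have hF0 : F 0 = 1 := by simp [F]
  have hFne : ∀ w, w ≠ 0 → F w = deriv g w⁻¹ := fun w hw => by simp [F, hw]
  have hinv : ∀ w : ℂ, w ≠ 0 → ‖w‖ < r⁻¹ → r < ‖w⁻¹‖ := by
    intro w hw h
    rw [norm_inv]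
    exact (lt_inv_comm₀ (norm_pos_iff.mpr hw) hr).mp h
  have hFA : ∀ w : ℂ, w ≠ 0 → ‖w‖ < r⁻¹ → AnalyticAt ℂ F w := by
    intro w hw h
    have h1 : AnalyticAt ℂ (fun w => deriv g w⁻¹) w :=
      AnalyticAt.fun_comp (hgA' w⁻¹ (hinv w hw h)) (analyticAt_inv hw)
    refine h1.congr ?_
    filter_upwards [isOpen_ne.mem_nhds hw] with z hz
    exact (hFne z hz).symm
  have hFA0 : AnalyticAt ℂ F 0 := by
    refine Complex.analyticAt_of_differentiable_on_punctured_nhds_of_continuousAt ?_ ?_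
    · have : Metric.ball (0:ℂ) r⁻¹ ∈ nhds (0:ℂ) := Metric.ball_mem_nhds _ (by positivity)
      filter_upwards [mem_nhdsWithin_of_mem_nhds this, self_mem_nhdsWithin] with z hz hz0
      exact (hFA z hz0 (by simpa using hz)).differentiableAt
    · rw [continuousAt_update_same]
      exact hlim.comp Filter.tendsto_inv₀_nhdsNE_zero
  have hRr : R⁻¹ < r⁻¹ := (inv_lt_inv₀ hR0 hr).mpr hR
  have habs : |R⁻¹| = R⁻¹ := abs_of_pos (by positivity)
  have hmean : Real.circleAverage (fun w => Real.log ‖F w‖) 0 R⁻¹ = Real.log ‖F 0‖ := by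
    refine AnalyticOnNhd.circleAverage_log_norm_of_ne_zero ?_ ?_
    · intro w hw
      rw [habs, mem_closedBall_zero_iff] at hw
      by_cases h : w = 0
      · rw [h]; exact hFA0
      · exact hFA w h (hw.trans_lt hRr)
    · intro w hw
      rw [habs, mem_closedBall_zero_iff] at hw
      by_cases h : w = 0
      · rw [h, hF0]; exact one_ne_zero
      · rw [hFne w h]
        exact hne _ (hinv w h (hw.trans_lt hRr))
  rw [hF0, norm_one, Real.log_one, Real.circleAverage_def, smul_eq_mul] at hmean
  set h : ℝ → ℝ := fun θ =>
    Real.log ‖deriv g ((R : ℂ) * Complex.exp ((θ : ℂ) * Complex.I))‖ with hh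
  have hnz : ∀ θ : ℝ, r < ‖(R : ℂ) * Complex.exp ((θ : ℂ) * Complex.I)‖ := by
    intro θ
    rw [norm_mul, Complex.norm_exp_ofReal_mul_I, mul_one, Complex.norm_real, Real.norm_eq_abs,
      abs_of_pos hR0]
    exact hR
  have hconj : ∀ θ : ℝ, (starRingEnd ℂ) ((R : ℂ) * Complex.exp ((θ : ℂ) * Complex.I))
      = (R : ℂ) * Complex.exp (-((θ : ℂ) * Complex.I)) := by
    intro θ
    rw [map_mul, Complex.conj_ofReal, ← Complex.exp_conj]
    simp
  have hFh : ∀ θ : ℝ, Real.log ‖F (circleMap 0 R⁻¹ θ)‖ = h θ := by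
    intro θ
    have h0 : circleMap 0 R⁻¹ θ ≠ 0 := circleMap_ne_center (by positivity)
    have h1 : (circleMap 0 R⁻¹ θ)⁻¹
        = (starRingEnd ℂ) ((R : ℂ) * Complex.exp ((θ : ℂ) * Complex.I)) := by
      rw [hconj, circleMap, zero_add, mul_inv, Complex.exp_neg]
      simp
    rw [hFne _ h0, h1, hsymd _ (hnz θ)]
  simp only [hFh] at hmean
  have hper : ∀ θ : ℝ, h (2 * Real.pi - θ) = h θ := by
    intro θ
    have h1 : (R : ℂ) * Complex.exp (((2 * Real.pi - θ : ℝ) : ℂ) * Complex.I)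
        = (starRingEnd ℂ) ((R : ℂ) * Complex.exp ((θ : ℂ) * Complex.I)) := by
      rw [hconj]
      congr 1
      push_cast
      rw [sub_mul, sub_eq_add_neg, Complex.exp_add, Complex.exp_two_pi_mul_I, one_mul]
    simp only [hh]
    rw [h1, hsymd _ (hnz θ)]
  have hcont : Continuous h := by
    rw [continuous_iff_continuousAt]
    intro θ
    have h1 : ContinuousAt (fun θ : ℝ => (R : ℂ) * Complex.exp ((θ : ℂ) * Complex.I)) θ := by
      fun_prop
    have h2 : ContinuousAt (fun θ : ℝ =>
        deriv g ((R : ℂ) * Complex.exp ((θ : ℂ) * Complex.I))) θ :=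
      ContinuousAt.comp' (hgA' _ (hnz θ)).continuousAt h1
    exact h2.norm.log (norm_ne_zero_iff.mpr (hne _ (hnz θ)))
  have hsplit := intervalIntegral.integral_add_adjacent_intervals
    (hcont.intervalIntegrable (μ := MeasureTheory.volume) 0 Real.pi)
    (hcont.intervalIntegrable (μ := MeasureTheory.volume) Real.pi (2 * Real.pi))
  have hsecond : ∫ θ in Real.pi..(2 * Real.pi), h θ = ∫ θ in (0:ℝ)..Real.pi, h θ := by
    have h1 := intervalIntegral.integral_comp_sub_left (a := 0) (b := Real.pi) h (2 * Real.pi)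
    simp only [hper] at h1
    rw [h1]
    congr 1 <;> ring
  have hzero : ∫ θ in (0:ℝ)..(2 * Real.pi), h θ = 0 :=
    (mul_eq_zero.mp hmean).resolve_left (by positivity)
  rw [hsecond, hzero] at hsplit
  have : ∫ θ in (0:ℝ)..Real.pi, h θ = 0 := by linarith
  rw [this, mul_zero]
end

section
/- Let r > 0 and let g : ℂ → ℂ be holomorphic on {z ∈ ℂ : |z| > r}, satisfy g(conj z) = conj(g z) for all |z| > r, and satisfy g(z) − z → 0 as |z| → ∞ (along the cobounded filter on ℂ). Let R > r, suppose |g(z)| > 1 for all |z| ≥ R, and let u ∈ ℂ with u ∉ g({z : |z| ≥ R}). Then (1/π) ∫_{θ=0}^{π} G_ℍ(u, g(R·exp(iθ))) dθ = 2·log(max(|u|,1)). -/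
open Filter Topology in
theorem aux_full (r R : ℝ) (hr : 0 < r) (hR : r < R)
    (g : ℂ → ℂ)
    (hg : DifferentiableOn ℂ g {z : ℂ | r < ‖z‖})
    (hnorm : Filter.Tendsto (fun z => g z - z) (Bornology.cobounded ℂ) (nhds 0))
    (c : ℂ) (hc : ∀ z : ℂ, R ≤ ‖z‖ → g z ≠ c) :
    ∫ θ in (-Real.pi)..Real.pi,
        Real.log ‖g ((R : ℂ) * Complex.exp ((θ : ℂ) * Complex.I)) - c‖
      = 2 * Real.pi * Real.log R := by
  have hR0 : 0 < R := hr.trans hR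
  set h : ℂ → ℂ := Function.update (fun ζ => (g ζ⁻¹ - c) * ζ) 0 1 with hh
  have h0 : h 0 = 1 := by simp [hh]
  have h1 : ∀ ζ, ζ ≠ 0 → h ζ = (g ζ⁻¹ - c) * ζ := fun ζ hζ => by simp [hh, hζ]
  have hopen : IsOpen {z : ℂ | r < ‖z‖} := isOpen_lt continuous_const continuous_norm
  have hcont : ContinuousAt h 0 := by
    rw [hh, continuousAt_update_same]
    have t1 : Tendsto (fun ζ : ℂ => g ζ⁻¹ - ζ⁻¹) (𝓝[≠] 0) (𝓝 0) :=
      hnorm.comp tendsto_inv₀_nhdsNE_zero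
    have t2 : Tendsto (fun ζ : ℂ => ζ) (𝓝[≠] 0) (𝓝 0) := tendsto_id.mono_left nhdsWithin_le_nhds
    have t3 := ((t1.sub_const c).mul t2).const_add 1
    simp only [mul_zero, add_zero] at t3
    refine t3.congr' ?_
    filter_upwards [self_mem_nhdsWithin] with ζ hζ
    have : ζ ≠ 0 := hζ
    field_simp
    ring
  have hball : Metric.ball (0:ℂ) r⁻¹ ∈ 𝓝 (0:ℂ) := Metric.ball_mem_nhds _ (inv_pos.2 hr)
  have hd : DifferentiableOn ℂ h (Metric.ball 0 r⁻¹) := by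
    rw [← Complex.differentiableOn_compl_singleton_and_continuousAt_iff hball]
    refine ⟨?_, hcont⟩
    have : DifferentiableOn ℂ (fun ζ => (g ζ⁻¹ - c) * ζ) (Metric.ball 0 r⁻¹ \ {0}) := by
      intro ζ hζ
      have hζ0 : ζ ≠ 0 := hζ.2
      have hζ1 : ‖ζ‖ < r⁻¹ := by simpa using hζ.1
      have : r < ‖ζ⁻¹‖ := by
        rw [norm_inv]; exact (lt_inv_comm₀ (norm_pos_iff.2 hζ0) hr).1 hζ1
      have hgd : DifferentiableAt ℂ g ζ⁻¹ := hg.differentiableAt (hopen.mem_nhds this)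
      have : DifferentiableAt ℂ (fun ζ => g ζ⁻¹) ζ := hgd.comp ζ (differentiableAt_inv hζ0)
      exact ((this.sub_const c).mul differentiableAt_id).differentiableWithinAt
    exact this.congr fun ζ hζ => h1 ζ hζ.2
  have hsub : Metric.closedBall (0:ℂ) |R⁻¹| ⊆ Metric.ball 0 r⁻¹ := by
    rw [abs_of_pos (inv_pos.2 hR0)]
    exact Metric.closedBall_subset_ball ((inv_lt_inv₀ hR0 hr).2 hR)
  have han : AnalyticOnNhd ℂ h (Metric.closedBall 0 |R⁻¹|) :=
    (hd.analyticOnNhd Metric.isOpen_ball).mono hsub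
  have hne : ∀ ζ ∈ Metric.closedBall (0:ℂ) |R⁻¹|, h ζ ≠ 0 := by
    intro ζ hζ
    by_cases hζ0 : ζ = 0
    · simp [hζ0, h0]
    rw [h1 ζ hζ0]
    have hζ1 : ‖ζ‖ ≤ R⁻¹ := by simpa [abs_of_pos hR0] using hζ
    have : R ≤ ‖ζ⁻¹‖ := by
      rw [norm_inv]; exact (le_inv_comm₀ (norm_pos_iff.2 hζ0) hR0).1 hζ1
    exact mul_ne_zero (sub_ne_zero.2 (hc _ this)) hζ0
  have key := AnalyticOnNhd.circleAverage_log_norm_of_ne_zero han hne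
  rw [h0, Real.circleAverage_eq_integral_add (-Real.pi),
    intervalIntegral.integral_comp_add_right
      (fun θ => Real.log ‖h (circleMap 0 R⁻¹ θ)‖)] at key
  have e1 : (0:ℝ) + -Real.pi = -Real.pi := by ring
  have e2 : 2 * Real.pi + -Real.pi = Real.pi := by ring
  rw [e1, e2] at key
  have hpi := Real.pi_pos
  have key2 : ∫ θ in (-Real.pi)..Real.pi, Real.log ‖h (circleMap 0 R⁻¹ θ)‖ = 0 := by
    simpa [hpi.ne'] using key
  have flip := intervalIntegral.integral_comp_neg (a := -Real.pi) (b := Real.pi)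
    (fun θ => Real.log ‖h (circleMap 0 R⁻¹ θ)‖)
  rw [neg_neg, key2] at flip
  have hRc : (R : ℂ) ≠ 0 := by exact_mod_cast hR0.ne'
  have pt : ∀ θ : ℝ, Real.log ‖g ((R : ℂ) * Complex.exp ((θ : ℂ) * Complex.I)) - c‖
      = Real.log ‖h (circleMap 0 R⁻¹ (-θ))‖ + Real.log R := by
    intro θ
    have hz : circleMap 0 R⁻¹ (-θ) = ((R : ℂ) * Complex.exp ((θ : ℂ) * Complex.I))⁻¹ := by
      simp [circleMap, Complex.exp_neg, mul_comm]
    have hn : ‖(R : ℂ) * Complex.exp ((θ : ℂ) * Complex.I)‖ = R := by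
      simp [Complex.norm_exp_ofReal_mul_I, abs_of_pos hR0]
    have hz0 : (R : ℂ) * Complex.exp ((θ : ℂ) * Complex.I) ≠ 0 :=
      mul_ne_zero hRc (Complex.exp_ne_zero _)
    have hgc : g ((R : ℂ) * Complex.exp ((θ : ℂ) * Complex.I)) - c ≠ 0 :=
      sub_ne_zero.2 (hc _ hn.ge)
    rw [hz, h1 _ (inv_ne_zero hz0), inv_inv, norm_mul, norm_inv, hn,
      Real.log_mul (norm_ne_zero_iff.2 hgc) (inv_ne_zero hR0.ne'), Real.log_inv]
    ring
  simp_rw [pt]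
  have hci : Continuous fun θ : ℝ => Real.log ‖h (circleMap 0 R⁻¹ (-θ))‖ := by
    have hm : ∀ θ : ℝ, circleMap 0 R⁻¹ (-θ) ∈ Metric.closedBall (0:ℂ) |R⁻¹| := by
      intro θ; simp
    refine Continuous.log (Continuous.norm ?_) fun θ => norm_ne_zero_iff.2 (hne _ (hm θ))
    exact han.continuousOn.comp_continuous
      ((continuous_circleMap 0 R⁻¹).comp continuous_neg) hm
  rw [intervalIntegral.integral_add (hci.intervalIntegrable _ _)
    intervalIntegrable_const, flip, intervalIntegral.integral_const, smul_eq_mul]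
  ring


/-- The covariance kernel `G_ℍ(z,w) = −log|z−w| − log|z − conj w|
+ 2 log|z|₊ + 2 log|w|₊` of the free-boundary GFF on `ℍ` normalized on the
unit upper semicircle, where `|z|₊ = max(|z|,1)`. -/
noncomputable def greenGH (z w : ℂ) : ℝ :=
  -Real.log ‖z - w‖ - Real.log ‖z - (starRingEnd ℂ) w‖
    + 2 * Real.log (max ‖z‖ 1) + 2 * Real.log (max (‖w‖) 1)

/-- Third claim of Lemma 4.3: under the hypotheses of the Schwarz-reflection
extension of a hydrodynamically normalized conformal map, if moreover
`|g(z)| > 1` for `|z| ≥ R`, then the average of `G_ℍ(u, g(·))` on the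
semicircle of radius `R` equals `G_ℍ(u, ∞) = 2 log(max(|u|,1))`. -/
theorem greenGH_avg_semicircle (r R : ℝ) (hr : 0 < r) (hR : r < R)
    (g : ℂ → ℂ)
    (hg : DifferentiableOn ℂ g {z : ℂ | r < ‖z‖})
    (hsym : ∀ z : ℂ, r < ‖z‖ → g ((starRingEnd ℂ) z) = (starRingEnd ℂ) (g z))
    (hnorm : Filter.Tendsto (fun z => g z - z) (Bornology.cobounded ℂ) (nhds 0))
    (hbig : ∀ z : ℂ, R ≤ ‖z‖ → 1 < ‖g z‖)
    (u : ℂ) (hu : u ∉ g '' {z : ℂ | R ≤ ‖z‖}) :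
    (1 / Real.pi) * ∫ θ in (0:ℝ)..Real.pi,
        greenGH u (g ((R : ℂ) * Complex.exp ((θ : ℂ) * Complex.I)))
      = 2 * Real.log (max (‖u‖) 1) := by
  have hR0 : 0 < R := hr.trans hR
  have hpi := Real.pi_pos
  set p : ℝ → ℂ := fun θ => (R : ℂ) * Complex.exp ((θ : ℂ) * Complex.I) with hp
  have hn : ∀ θ, ‖p θ‖ = R := fun θ => by
    simp [hp, Complex.norm_exp_ofReal_mul_I, abs_of_pos hR0]
  have hconj : ∀ θ, (starRingEnd ℂ) (g (p θ)) = g (p (-θ)) := fun θ => by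
    rw [← hsym _ (by rw [hn]; exact hR)]
    simp [hp, ← Complex.exp_conj]
  have hcu : ∀ z : ℂ, R ≤ ‖z‖ → g z ≠ u := fun z hz h => hu ⟨z, hz, h⟩
  have hc0 : ∀ z : ℂ, R ≤ ‖z‖ → g z ≠ 0 := fun z hz h => by
    have := hbig z hz
    rw [h, norm_zero] at this
    linarith
  have hopen : IsOpen {z : ℂ | r < ‖z‖} := isOpen_lt continuous_const continuous_norm
  have hpc : Continuous p := by fun_prop
  have hgp : Continuous fun θ => g (p θ) :=
    hg.continuousOn.comp_continuous hpc fun θ => by simpa [hn] using hR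
  have hcont : ∀ c : ℂ, (∀ z : ℂ, R ≤ ‖z‖ → g z ≠ c) →
      Continuous fun θ => Real.log ‖g (p θ) - c‖ := fun c hc =>
    Continuous.log (hgp.sub continuous_const).norm
      fun θ => norm_ne_zero_iff.2 (sub_ne_zero.2 (hc _ (hn θ).ge))
  have Iu := aux_full r R hr hR g hg hnorm u hcu
  have I0 := aux_full r R hr hR g hg hnorm 0 hc0
  set F : ℝ → ℝ := fun θ => Real.log ‖g (p θ) - 0‖ - Real.log ‖g (p θ) - u‖ with hF
  have hFc : Continuous F := (hcont 0 hc0).sub (hcont u hcu)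
  have IF : ∫ θ in (-Real.pi)..Real.pi, F θ = 0 := by
    rw [hF, intervalIntegral.integral_sub ((hcont 0 hc0).intervalIntegrable _ _)
      ((hcont u hcu).intervalIntegrable _ _), I0, Iu, sub_self]
  have pt : ∀ θ, greenGH u (g (p θ)) = F θ + F (-θ) + 2 * Real.log (max ‖u‖ 1) := by
    intro θ
    have hnn : ‖g (p (-θ))‖ = ‖g (p θ)‖ := by rw [← hconj, Complex.norm_conj]
    simp only [greenGH, hF, hconj, sub_zero, hnn]
    rw [max_eq_left (hbig _ (hn θ).ge).le, norm_sub_rev u, norm_sub_rev u]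
    ring
  have hFn : Continuous fun θ => F (-θ) := hFc.comp continuous_neg
  have hFs : Continuous fun θ => F θ + F (-θ) := hFc.add hFn
  have goal2 : ∫ θ in (0:ℝ)..Real.pi, greenGH u (g (p θ))
      = Real.pi * (2 * Real.log (max ‖u‖ 1)) := by
    simp_rw [pt]
    rw [intervalIntegral.integral_add (hFs.intervalIntegrable _ _)
      intervalIntegrable_const, intervalIntegral.integral_add (hFc.intervalIntegrable _ _)
      (hFn.intervalIntegrable _ _), intervalIntegral.integral_comp_neg, neg_zero, add_comm
      (∫ θ in (0:ℝ)..Real.pi, F θ), intervalIntegral.integral_add_adjacent_intervals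
      (hFc.intervalIntegrable _ _) (hFc.intervalIntegrable _ _), IF,
      intervalIntegral.integral_const, smul_eq_mul]
    ring
  rw [goal2]
  field_simp
end

section
/- Let r > 0 and let g : ℂ → ℂ be holomorphic on {z ∈ ℂ : |z| > r}, satisfy g(conj z) = conj(g z) for all |z| > r, and satisfy g(z) − z → 0 as |z| → ∞ (along the cobounded filter on ℂ). Let R > r and suppose |g(z)| > 1 for all |z| ≥ R. Then (1/π) ∫_{θ=0}^{π} 2·log(max(|g(R·exp(iθ))|, 1)) dθ = 2·log R. -/
/-- Fourth claim of Lemma 4.3: under the hypotheses of the Schwarz-reflection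
extension of a hydrodynamically normalized conformal map, if `|g(z)| > 1` for
`|z| ≥ R`, then the average of `G_ℍ(∞, g(·)) = 2 log(max(|g(·)|,1))` on the
semicircle of radius `R` equals `2 log R`. -/
theorem greenGH_infinity_avg_semicircle (r R : ℝ) (hr : 0 < r) (hR : r < R)
    (g : ℂ → ℂ)
    (hg : DifferentiableOn ℂ g {z : ℂ | r < ‖z‖})
    (hsym : ∀ z : ℂ, r < ‖z‖ → g ((starRingEnd ℂ) z) = (starRingEnd ℂ) (g z))
    (hnorm : Filter.Tendsto (fun z => g z - z) (Bornology.cobounded ℂ) (nhds 0))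
    (hbig : ∀ z : ℂ, R ≤ ‖z‖ → 1 < ‖g z‖) :
    (1 / Real.pi) * ∫ θ in (0:ℝ)..Real.pi,
        2 * Real.log (max ‖g ((R : ℂ) * Complex.exp ((θ : ℂ) * Complex.I))‖ 1)
      = 2 * Real.log R := by
  have hR0 : 0 < R := hr.trans hR
  set h : ℂ → ℂ := Function.update (fun w => w * g w⁻¹) 0 1 with hh
  have h0 : h 0 = 1 := by simp [hh]
  have hne : ∀ w, w ≠ 0 → h w = w * g w⁻¹ := fun w hw => by simp [hh, hw]
  have hopen : IsOpen {z : ℂ | r < ‖z‖} := isOpen_lt continuous_const continuous_norm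
  have hinv : ∀ w : ℂ, w ≠ 0 → ‖w‖ < r⁻¹ → r < ‖w⁻¹‖ := fun w hw h1 => by
    rw [norm_inv]
    exact (lt_inv_comm₀ (norm_pos_iff.2 hw) hr).1 h1
  have hcont : Filter.Tendsto (fun w => w * g w⁻¹) (nhdsWithin (0:ℂ) {0}ᶜ) (nhds 1) := by
    have t1 : Filter.Tendsto (fun w : ℂ => g w⁻¹ - w⁻¹) (nhdsWithin (0:ℂ) {0}ᶜ) (nhds 0) :=
      hnorm.comp Filter.tendsto_inv₀_nhdsNE_zero
    have t2 : Filter.Tendsto (fun w : ℂ => w) (nhdsWithin (0:ℂ) {0}ᶜ) (nhds 0) :=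
      tendsto_nhdsWithin_of_tendsto_nhds Filter.tendsto_id
    have t3 := (t2.mul t1).add_const 1
    simp only [mul_zero, zero_add] at t3
    refine t3.congr' ?_
    filter_upwards [self_mem_nhdsWithin] with w hw
    have : w ≠ 0 := hw
    field_simp
    ring
  have hdiff : DifferentiableOn ℂ h (Metric.ball 0 r⁻¹) := by
    rw [← Complex.differentiableOn_compl_singleton_and_continuousAt_iff
      (c := (0:ℂ)) (Metric.ball_mem_nhds _ (inv_pos.2 hr))]
    refine ⟨?_, ?_⟩
    · have : DifferentiableOn ℂ (fun w => w * g w⁻¹) (Metric.ball 0 r⁻¹ \ {0}) := by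
        refine differentiableOn_id.mul (hg.comp ?_ ?_)
        · exact differentiableOn_inv.mono fun w hw => hw.2
        · intro w hw
          exact hinv w hw.2 (by simpa using hw.1)
      exact this.congr fun w hw => hne w hw.2
    · rw [continuousAt_iff_punctured_nhds, h0]
      refine hcont.congr' ?_
      filter_upwards [self_mem_nhdsWithin] with w hw using (hne w hw).symm
  have habs : |R⁻¹| = R⁻¹ := abs_of_pos (inv_pos.2 hR0)
  have hlt : R⁻¹ < r⁻¹ := (inv_lt_inv₀ hR0 hr).2 hR
  have hball : Metric.closedBall (0:ℂ) |R⁻¹| ⊆ Metric.ball 0 r⁻¹ := by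
    rw [habs]; exact Metric.closedBall_subset_ball hlt
  have hA : AnalyticOnNhd ℂ h (Metric.closedBall 0 |R⁻¹|) :=
    (hdiff.analyticOnNhd Metric.isOpen_ball).mono hball
  have hnz : ∀ u ∈ Metric.closedBall (0:ℂ) |R⁻¹|, h u ≠ 0 := by
    intro u hu
    by_cases hu0 : u = 0
    · rw [hu0, h0]; exact one_ne_zero
    · rw [hne u hu0]
      refine mul_ne_zero hu0 fun hz => ?_
      rw [habs] at hu
      have : R ≤ ‖u⁻¹‖ := by
        rw [norm_inv]
        exact (le_inv_comm₀ (norm_pos_iff.2 hu0) hR0).1 (by simpa using hu)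
      have := hbig _ this
      rw [hz] at this
      norm_num at this
  have key := AnalyticOnNhd.circleAverage_log_norm_of_ne_zero hA hnz
  rw [h0, Real.circleAverage_def] at key
  set F : ℝ → ℝ := fun θ => Real.log ‖g ((R : ℂ) * Complex.exp ((θ : ℂ) * Complex.I))‖ with hF
  have hnR : ∀ θ : ℝ, ‖(R : ℂ) * Complex.exp ((θ : ℂ) * Complex.I)‖ = R := fun θ => by
    rw [norm_mul, Complex.norm_exp_ofReal_mul_I, Complex.norm_real, mul_one, Real.norm_of_nonneg hR0.le]
  have hFneg : ∀ θ, F (-θ) = F θ := by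
    intro θ
    have e : (R : ℂ) * Complex.exp (((-θ : ℝ) : ℂ) * Complex.I)
        = (starRingEnd ℂ) ((R : ℂ) * Complex.exp ((θ : ℂ) * Complex.I)) := by
      rw [map_mul, ← Complex.exp_conj, map_mul, Complex.conj_ofReal, Complex.conj_ofReal,
        Complex.conj_I]
      push_cast
      ring_nf
    simp only [hF]
    rw [e, hsym _ (by rw [hnR]; exact hR), RCLike.norm_conj]
  have hFper : ∀ θ, F (2 * Real.pi - θ) = F θ := by
    intro θ
    rw [← hFneg θ]
    simp only [hF]
    congr 4
    rw [Complex.exp_eq_exp_iff_exists_int]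
    exact ⟨1, by push_cast; ring⟩
  have hgpos : ∀ θ : ℝ, 1 < ‖g ((R : ℂ) * Complex.exp ((θ : ℂ) * Complex.I))‖ :=
    fun θ => hbig _ (hnR θ).ge
  have hFcont : Continuous F := by
    refine Continuous.log (Continuous.norm ?_) fun θ => by linarith [hgpos θ]
    refine hg.continuousOn.comp_continuous (by fun_prop) fun θ => ?_
    show r < _
    rw [hnR]; exact hR
  have hcirc : ∀ θ : ℝ, Real.log ‖h (circleMap 0 R⁻¹ θ)‖ = F θ - Real.log R := by
    intro θ
    have hc : circleMap 0 R⁻¹ θ ≠ 0 := by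
      simp [circleMap, hR0.ne']
    have e : (circleMap 0 R⁻¹ θ)⁻¹ = (R : ℂ) * Complex.exp (((-θ : ℝ) : ℂ) * Complex.I) := by
      simp [circleMap, ← Complex.exp_neg, mul_comm]
    rw [hne _ hc, norm_mul, e, Real.log_mul (norm_ne_zero_iff.2 hc)
      (by linarith [hgpos (-θ)])]
    have : Real.log ‖g ((R : ℂ) * Complex.exp (((-θ : ℝ) : ℂ) * Complex.I))‖ = F θ := hFneg θ
    rw [this, norm_circleMap_zero, habs, Real.log_inv]
    ring
  simp only [hcirc, norm_one, Real.log_one, smul_eq_mul] at key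
  have hi : ∀ a b, IntervalIntegrable F MeasureTheory.volume a b :=
    fun a b => hFcont.intervalIntegrable a b
  rw [intervalIntegral.integral_sub (hi _ _) (by simp),
    ← intervalIntegral.integral_add_adjacent_intervals (hi 0 Real.pi) (hi Real.pi (2 * Real.pi))]
    at key
  have hhalf : ∫ θ in Real.pi..(2 * Real.pi), F θ = ∫ θ in (0:ℝ)..Real.pi, F θ := by
    have := intervalIntegral.integral_comp_sub_left (a := 0) (b := Real.pi) F (2 * Real.pi)
    simp only [hFper] at this
    rw [this]
    congr 1 <;> ring
  rw [hhalf, intervalIntegral.integral_const] at key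
  have hfin : ∀ θ : ℝ, 2 * Real.log (max ‖g ((R : ℂ) * Complex.exp ((θ : ℂ) * Complex.I))‖ 1)
      = 2 * F θ := fun θ => by rw [max_eq_left (hgpos θ).le]
  simp only [hfin]
  rw [intervalIntegral.integral_const_mul]
  have hpi := Real.pi_pos
  simp only [smul_eq_mul, sub_zero] at key
  field_simp at key ⊢
  linarith
end

section
/- Let x₀ ∈ ℝ and ε > 0, let U ⊆ ℂ be an open set containing the closed ball of radius ε around x₀, and let g : ℂ → ℂ be holomorphic on U with g(x) ∈ ℝ for every real x ∈ [x₀−ε, x₀+ε] and Im(g(v)) > 0 for every v in the closed ball with Im(v) > 0. Let u ∈ ℂ with Im(u) ≥ 0 and u ∉ g(closedBall(x₀, ε) ∩ {v : Im v ≥ 0}). Then (1/π) ∫_{θ=0}^{π} G(u, g(x₀ + ε·exp(iθ))) dθ = G(u, g(x₀)). -/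
/-- Second claim of Lemma 4.6 (boundary mean value property): if `g` is
holomorphic on an open set containing `closedBall x₀ ε` (`x₀ ∈ ℝ`), maps
`[x₀−ε, x₀+ε]` into `ℝ` and the open upper part of the ball into `ℍ`, and `u`
(with `Im u ≥ 0`) avoids the image of the closed upper half-ball, then the
average of `G(u, g(·))` on the upper semicircle `∂B_ε(x₀) ∩ ℍ` equals
`G(u, g(x₀))`. -/
theorem green_mean_value_boundary (x₀ : ℝ) (ε : ℝ) (hε : 0 < ε)
    (U : Set ℂ) (hU : IsOpen U) (hball : Metric.closedBall (x₀ : ℂ) ε ⊆ U)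
    (g : ℂ → ℂ) (hg : DifferentiableOn ℂ g U)
    (hreal : ∀ x : ℝ, x ∈ Set.Icc (x₀ - ε) (x₀ + ε) → (g (x : ℂ)).im = 0)
    (him : ∀ v ∈ Metric.closedBall (x₀ : ℂ) ε, 0 < v.im → 0 < (g v).im)
    (u : ℂ) (huim : 0 ≤ u.im)
    (hu : u ∉ g '' (Metric.closedBall (x₀ : ℂ) ε ∩ {v : ℂ | 0 ≤ v.im})) :
    (1 / Real.pi) * ∫ θ in (0:ℝ)..Real.pi,
        greenG u (g ((x₀ : ℂ) + (ε : ℂ) * Complex.exp ((θ : ℂ) * Complex.I)))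
      = greenG u (g (x₀ : ℂ)) := by
  have hsymm : ∀ v ∈ Metric.closedBall (x₀ : ℂ) ε,
      (starRingEnd ℂ) v ∈ Metric.closedBall (x₀ : ℂ) ε := by
    intro v hv
    rw [mem_closedBall_iff_norm] at hv ⊢
    have : (starRingEnd ℂ) v - (x₀ : ℂ) = (starRingEnd ℂ) (v - x₀) := by simp
    rw [this, RCLike.norm_conj]
    exact hv
  have han : AnalyticOnNhd ℂ g (Metric.closedBall (x₀ : ℂ) ε) :=
    (hg.analyticOnNhd hU).mono hball
  have hda : ∀ v ∈ U, DifferentiableAt ℂ g v := fun v hv =>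
    (hg v hv).differentiableAt (hU.mem_nhds hv)
  have hV : IsOpen ((starRingEnd ℂ) ⁻¹' U) := hU.preimage Complex.continuous_conj
  have hd2 : DifferentiableOn ℂ ((starRingEnd ℂ) ∘ g ∘ (starRingEnd ℂ))
      ((starRingEnd ℂ) ⁻¹' U) := by
    intro v hv
    have h1 := (hda _ hv).conj_conj
    rw [Complex.conj_conj] at h1
    exact h1.differentiableWithinAt
  have han2 : AnalyticOnNhd ℂ ((starRingEnd ℂ) ∘ g ∘ (starRingEnd ℂ))
      (Metric.closedBall (x₀ : ℂ) ε) :=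
    (hd2.analyticOnNhd hV).mono (fun v hv => hball (hsymm v hv))
  have hfreq : ∃ᶠ z in nhdsWithin (x₀ : ℂ) {(x₀ : ℂ)}ᶜ,
      g z = ((starRingEnd ℂ) ∘ g ∘ (starRingEnd ℂ)) z := by
    have ht : Filter.Tendsto (fun x : ℝ => (x : ℂ)) (nhdsWithin x₀ {x₀}ᶜ)
        (nhdsWithin (x₀ : ℂ) {(x₀ : ℂ)}ᶜ) := by
      apply Complex.continuous_ofReal.continuousAt.continuousWithinAt.tendsto_nhdsWithin
      intro x hx
      simpa using hx
    apply ht.frequently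
    apply Filter.Eventually.frequently
    have hI : Set.Icc (x₀ - ε) (x₀ + ε) ∈ nhds x₀ :=
      Icc_mem_nhds (by linarith) (by linarith)
    filter_upwards [nhdsWithin_le_nhds hI] with x hx
    have := hreal x hx
    simp only [Function.comp_apply, Complex.conj_ofReal]
    exact (Complex.conj_eq_iff_im.2 this).symm
  have hrefl0 := han.eqOn_of_preconnected_of_frequently_eq han2
    (convex_closedBall (x₀ : ℂ) ε).isPreconnected (Metric.mem_closedBall_self hε.le) hfreq
  have hrefl : ∀ v ∈ Metric.closedBall (x₀ : ℂ) ε,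
      g ((starRingEnd ℂ) v) = (starRingEnd ℂ) (g v) := by
    intro v hv
    have := hrefl0 (hsymm v hv)
    simpa using this
  have hne : ∀ v ∈ Metric.closedBall (x₀ : ℂ) ε, u - g v ≠ 0 := by
    intro v hv h0
    have h1 : u = g v := sub_eq_zero.1 h0
    rcases le_or_gt 0 v.im with h | h
    · exact hu ⟨v, ⟨hv, h⟩, h1.symm⟩
    · have h2 := him _ (hsymm v hv) (by simpa using h)
      rw [hrefl v hv, ← h1, Complex.conj_im] at h2
      linarith
  have hne2 : ∀ v ∈ Metric.closedBall (x₀ : ℂ) ε, (starRingEnd ℂ) u - g v ≠ 0 := by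
    intro v hv h0
    apply hne _ (hsymm v hv)
    rw [hrefl v hv]
    have := congrArg (starRingEnd ℂ) h0
    simpa using this
  have hG : ∀ w : ℂ, greenG u w =
      -Real.log ‖u - w‖ - Real.log ‖(starRingEnd ℂ) u - w‖ := by
    intro w
    have : ‖u - (starRingEnd ℂ) w‖ = ‖(starRingEnd ℂ) u - w‖ := by
      rw [← RCLike.norm_conj]; simp
    rw [greenG, this]
  have hsym : ∀ w : ℂ, greenG u ((starRingEnd ℂ) w) = greenG u w := by
    intro w
    simp only [greenG, Complex.conj_conj]
    ring
  have hharm : InnerProductSpace.HarmonicOnNhd (fun v => greenG u (g v))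
      (Metric.closedBall (x₀ : ℂ) |ε|) := by
    rw [abs_of_pos hε]
    intro v hv
    have h1 := AnalyticAt.harmonicAt_log_norm (f := fun v => u - g v)
      (analyticAt_const.sub (han v hv)) (hne v hv)
    have h2 := AnalyticAt.harmonicAt_log_norm (f := fun v => (starRingEnd ℂ) u - g v)
      (analyticAt_const.sub (han v hv)) (hne2 v hv)
    have h3 := h1.neg.sub h2
    convert h3 using 1
    funext v
    simp [hG]
  have havg := hharm.circleAverage_eq
  have hint : CircleIntegrable (fun v => greenG u (g v)) (x₀ : ℂ) ε :=
    (hharm.continuousOn.mono Metric.sphere_subset_closedBall).circleIntegrable'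
  rw [Real.circleAverage_def] at havg
  have hcm : ∀ θ : ℝ, circleMap (x₀ : ℂ) ε (2 * Real.pi - θ)
      = (starRingEnd ℂ) (circleMap (x₀ : ℂ) ε θ) := by
    intro θ
    have h1 : Complex.exp (((2 * Real.pi - θ : ℝ) : ℂ) * Complex.I)
        = Complex.exp (-(θ : ℂ) * Complex.I) := by
      rw [← Complex.exp_periodic (-(θ : ℂ) * Complex.I)]
      congr 1
      push_cast
      ring
    simp only [circleMap, h1, map_add, map_mul, Complex.conj_ofReal, ← Complex.exp_conj,
      Complex.conj_I]
    congr 3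
    ring
  have hhalf : ∫ θ in Real.pi..(2 * Real.pi), greenG u (g (circleMap (x₀ : ℂ) ε θ))
      = ∫ θ in (0:ℝ)..Real.pi, greenG u (g (circleMap (x₀ : ℂ) ε θ)) := by
    have h1 := intervalIntegral.integral_comp_sub_left (a := 0) (b := Real.pi)
      (fun θ => greenG u (g (circleMap (x₀ : ℂ) ε θ))) (2 * Real.pi)
    rw [show 2 * Real.pi - Real.pi = Real.pi by ring, sub_zero] at h1
    rw [← h1]
    apply intervalIntegral.integral_congr
    intro θ _
    simp only
    rw [hcm, hrefl _ (circleMap_mem_closedBall _ hε.le θ), hsym]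
  have hi : IntervalIntegrable (fun θ => greenG u (g (circleMap (x₀ : ℂ) ε θ)))
      MeasureTheory.volume 0 (2 * Real.pi) := hint
  have hpi := Real.pi_pos
  have hsplit := intervalIntegral.integral_add_adjacent_intervals
    (hi.mono_set (c := 0) (d := Real.pi) (by
      rw [Set.uIcc_of_le hpi.le, Set.uIcc_of_le (by linarith)]
      exact Set.Icc_subset_Icc le_rfl (by linarith)))
    (hi.mono_set (c := Real.pi) (d := 2 * Real.pi) (by
      rw [Set.uIcc_of_le (by linarith), Set.uIcc_of_le (by linarith)]
      exact Set.Icc_subset_Icc hpi.le le_rfl))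
  rw [← hsplit, hhalf, smul_eq_mul] at havg
  change (1 / Real.pi) * ∫ θ in (0:ℝ)..Real.pi, greenG u (g (circleMap (x₀ : ℂ) ε θ)) = _
  rw [← havg]
  field_simp
  ring
end

section
/- Let z₀ ∈ ℂ and ε > 0, let U ⊆ ℂ be an open set containing the closed ball of radius ε around z₀, and let g : ℂ → ℂ be holomorphic and injective on U with Im(g(v)) > 0 for every v in the closed ball. Then (1/(2π)) ∫_{θ=0}^{2π} G(g(z₀), g(z₀ + ε·exp(iθ))) dθ = −log ε − log|g'(z₀)| − log(2·Im(g(z₀))), where g' denotes the complex derivative of g. -/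
open Filter Topology in
theorem deriv_ne_zero_of_injOn_aux {f : ℂ → ℂ} {z₀ : ℂ} {U : Set ℂ} (hU : U ∈ 𝓝 z₀)
    (hf : AnalyticAt ℂ f z₀) (hinj : Set.InjOn f U) : deriv f z₀ ≠ 0 := by
  intro hd
  have hz₀ : z₀ ∈ U := mem_of_mem_nhds hU
  have hnc : ¬ ∀ᶠ z in 𝓝 z₀, f z = f z₀ := by
    intro h
    have h1 : ∀ᶠ z in 𝓝[≠] z₀, False := by
      filter_upwards [h.filter_mono nhdsWithin_le_nhds, mem_nhdsWithin_of_mem_nhds hU,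
        self_mem_nhdsWithin] with z hz hzU hne
      exact hne (hinj hzU hz₀ hz)
    simp [Filter.eventually_false_iff_eq_bot] at h1
    exact NeBot.ne (inferInstance : (𝓝[≠] z₀).NeBot) h1
  have hf' : AnalyticAt ℂ (fun z => f z - f z₀) z₀ := hf.sub analyticAt_const
  obtain ⟨n, h, han, hne, heq⟩ := hf'.exists_eventuallyEq_pow_smul_nonzero_iff.2
    (by simpa only [sub_eq_zero] using hnc)
  have hn0 : n ≠ 0 := by
    rintro rfl
    have := heq.self_of_nhds
    simp at this
    exact hne this.symm
  have hn1 : n ≠ 1 := by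
    rintro rfl
    have h1 : HasDerivAt (fun z => (z - z₀) ^ 1 • h z) (h z₀) z₀ := by
      have := ((hasDerivAt_id z₀).sub_const z₀).mul han.differentiableAt.hasDerivAt
      simpa [Pi.mul_def] using this
    have h2 := (h1.congr_of_eventuallyEq heq).deriv
    rw [deriv_sub_const, hd] at h2
    exact hne h2.symm
  obtain ⟨c, hc⟩ := IsAlgClosed.exists_pow_nat_eq (h z₀) (Nat.pos_of_ne_zero hn0)
  set k : ℂ → ℂ := fun z => (z - z₀) * (c * Complex.exp (Complex.log (h z / h z₀) / n)) with hk
  have hkan : AnalyticAt ℂ k z₀ := by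
    refine (analyticAt_id.sub analyticAt_const).mul (analyticAt_const.mul ?_)
    refine AnalyticAt.cexp ?_
    refine AnalyticAt.div ?_ analyticAt_const (by exact_mod_cast hn0)
    refine AnalyticAt.clog (han.div analyticAt_const hne) ?_
    simp [div_self hne]
  have hkn : ∀ᶠ z in 𝓝 z₀, f z - f z₀ = k z ^ n := by
    filter_upwards [heq, han.continuousAt.eventually_ne hne] with z hz hz'
    rw [hz, hk]
    simp only [mul_pow, smul_eq_mul]
    rw [hc, ← Complex.exp_nat_mul, mul_div_cancel₀ _ (by exact_mod_cast hn0),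
      Complex.exp_log (div_ne_zero hz' hne), mul_div_cancel₀ _ hne]
  have hk0 : k z₀ = 0 := by simp [hk]
  have hopen : 𝓝 (k z₀) ≤ map k (𝓝 z₀) := by
    refine hkan.eventually_constant_or_nhds_le_map_nhds_aux.resolve_left fun hconst => hnc ?_
    filter_upwards [hconst, hkn] with z h1 h2
    rw [h1, hk0, zero_pow hn0, sub_eq_zero] at h2
    exact h2
  rw [hk0] at hopen
  have himg := hopen (image_mem_map (hkn.and hU))
  have hζ := Complex.isPrimitiveRoot_exp n hn0
  set ζ := Complex.exp (2 * Real.pi * Complex.I / n)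
  have himg2 : ∀ᶠ w in 𝓝 (0:ℂ), ζ * w ∈ k '' {z | f z - f z₀ = k z ^ n ∧ U z} := by
    have : Tendsto (fun w : ℂ => ζ * w) (𝓝 0) (𝓝 0) := by
      have : Continuous (fun w : ℂ => ζ * w) := by fun_prop
      simpa using this.tendsto 0
    exact this himg
  have hev : ∀ᶠ w in 𝓝[≠] (0:ℂ), False := by
    filter_upwards [himg2.filter_mono nhdsWithin_le_nhds,
      mem_nhdsWithin_of_mem_nhds himg, self_mem_nhdsWithin] with w h2 h1 h0
    obtain ⟨a, ⟨ha, haU⟩, hka⟩ := h1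
    obtain ⟨b, ⟨hb, hbU⟩, hkb⟩ := h2
    have hab : f a = f b := by
      rw [hka] at ha
      rw [hkb, mul_pow, hζ.pow_eq_one, one_mul, ← ha] at hb
      exact (sub_left_injective hb).symm
    have := hinj haU hbU hab
    rw [this, hkb] at hka
    have h3 : ζ = 1 := mul_right_cancel₀ h0 (by rw [hka, one_mul])
    exact hζ.ne_one (by omega) h3
  simp [Filter.eventually_false_iff_eq_bot] at hev
  exact NeBot.ne (inferInstance : (𝓝[≠] (0:ℂ)).NeBot) hev

theorem green_selfavg_interior (z₀ : ℂ) (ε : ℝ) (hε : 0 < ε)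
    (U : Set ℂ) (hU : IsOpen U) (hball : Metric.closedBall z₀ ε ⊆ U)
    (g : ℂ → ℂ) (hg : DifferentiableOn ℂ g U) (hinj : Set.InjOn g U)
    (him : ∀ v ∈ Metric.closedBall z₀ ε, 0 < (g v).im) :
    (1 / (2 * Real.pi)) * ∫ θ in (0:ℝ)..(2 * Real.pi),
        greenG (g z₀) (g (z₀ + (ε : ℂ) * Complex.exp ((θ : ℂ) * Complex.I)))
      = -Real.log ε - Real.log ‖deriv g z₀‖
        - Real.log (2 * (g z₀).im) := by
  have habs : |ε| = ε := abs_of_pos hε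
  have hzb : z₀ ∈ Metric.closedBall z₀ ε := Metric.mem_closedBall_self hε.le
  have hUn : U ∈ nhds z₀ := hU.mem_nhds (hball hzb)
  have hgan : AnalyticOnNhd ℂ g U := hg.analyticOnNhd hU
  have hd : deriv g z₀ ≠ 0 := deriv_ne_zero_of_injOn_aux hUn (hgan z₀ (hball hzb)) hinj
  have hsan : AnalyticOnNhd ℂ (dslope g z₀) (Metric.closedBall z₀ |ε|) := by
    rw [habs]
    exact (((Complex.differentiableOn_dslope hUn).2 hg).analyticOnNhd hU).mono hball
  have hsne : ∀ u ∈ Metric.closedBall z₀ |ε|, dslope g z₀ u ≠ 0 := by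
    rw [habs]
    intro u hu h0
    by_cases h : u = z₀
    · rw [h, dslope_same] at h0
      exact hd h0
    · have := sub_smul_dslope g z₀ u
      rw [h0, smul_zero] at this
      exact h (hinj (hball hu) (hball hzb) (sub_eq_zero.1 this.symm))
  have hcan : AnalyticOnNhd ℂ (fun u => g u - (starRingEnd ℂ) (g z₀))
      (Metric.closedBall z₀ |ε|) := by
    rw [habs]
    exact fun u hu => (hgan u (hball hu)).sub analyticAt_const
  have hcne : ∀ u ∈ Metric.closedBall z₀ |ε|, g u - (starRingEnd ℂ) (g z₀) ≠ 0 := by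
    rw [habs]
    intro u hu h0
    have := congrArg Complex.im h0
    simp at this
    linarith [him u hu, him z₀ hzb]
  have e1 := hsan.circleAverage_log_norm_of_ne_zero hsne
  have e2 := hcan.circleAverage_log_norm_of_ne_zero hcne
  have i1 : CircleIntegrable (fun u => Real.log ‖dslope g z₀ u‖) z₀ ε :=
    MeromorphicOn.circleIntegrable_log_norm
      fun u hu => (hsan u (Metric.sphere_subset_closedBall hu)).meromorphicAt
  have i2 : CircleIntegrable (fun u => Real.log ‖g u - (starRingEnd ℂ) (g z₀)‖) z₀ ε :=
    MeromorphicOn.circleIntegrable_log_norm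
      fun u hu => (hcan u (Metric.sphere_subset_closedBall hu)).meromorphicAt
  have i3 : CircleIntegrable (fun u => -Real.log ε - Real.log ‖dslope g z₀ u‖) z₀ ε :=
    (circleIntegrable_const _ _ _).sub i1
  have key : Set.EqOn (fun u => greenG (g z₀) (g u))
      (fun u => (-Real.log ε - Real.log ‖dslope g z₀ u‖)
        - Real.log ‖g u - (starRingEnd ℂ) (g z₀)‖) (Metric.sphere z₀ |ε|) := by
    intro u hu
    have hn : ‖u - z₀‖ = ε := by rw [← habs]; simpa [dist_eq_norm] using hu
    have h1 : ‖g z₀ - g u‖ = ε * ‖dslope g z₀ u‖ := by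
      rw [norm_sub_rev, ← sub_smul_dslope g z₀ u, norm_smul, hn]
    have h2 : ‖g z₀ - (starRingEnd ℂ) (g u)‖ = ‖g u - (starRingEnd ℂ) (g z₀)‖ := by
      rw [← Complex.norm_conj, map_sub, Complex.conj_conj, norm_sub_rev]
    simp only [greenG]
    rw [h1, h2, Real.log_mul hε.ne'
      (norm_ne_zero_iff.2 (hsne u (Metric.sphere_subset_closedBall hu)))]
    ring
  have hL : (1 / (2 * Real.pi)) * ∫ θ in (0:ℝ)..(2 * Real.pi),
        greenG (g z₀) (g (z₀ + (ε : ℂ) * Complex.exp ((θ : ℂ) * Complex.I)))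
      = Real.circleAverage (fun u => greenG (g z₀) (g u)) z₀ ε := by
    simp [Real.circleAverage_def, circleMap]
  rw [hL, Real.circleAverage_congr_sphere key,
    Real.circleAverage_fun_sub i3 i2,
    Real.circleAverage_fun_sub (circleIntegrable_const _ _ _) i1, Real.circleAverage_const,
    e1, e2, dslope_same]
  have h3 : g z₀ - (starRingEnd ℂ) (g z₀) = ((2 * (g z₀).im : ℝ) : ℂ) * Complex.I := by
    rw [Complex.sub_conj]
  rw [h3, norm_mul, Complex.norm_I, mul_one, Complex.norm_real, Real.norm_eq_abs,
    abs_of_pos (by linarith [him z₀ hzb])]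
end

section
/- Let x₀ ∈ ℝ and ε > 0, let U ⊆ ℂ be an open set containing the closed ball of radius ε around x₀, and let g : ℂ → ℂ be holomorphic and injective on U with g(x) ∈ ℝ for every real x ∈ [x₀−ε, x₀+ε] and Im(g(v)) > 0 for every v in the closed ball with Im(v) > 0. Then (1/π) ∫_{θ=0}^{π} G(g(x₀), g(x₀ + ε·exp(iθ))) dθ = −2·log ε − 2·log|g'(x₀)|, where g' denotes the complex derivative of g. -/
open Filter Topology in
/-- A holomorphic function that maps the upper half of a disc to the upper half-plane and
real points to real points has nonvanishing derivative at the center. -/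
lemma green_aux_deriv_ne_zero (x₀ : ℝ) (ε : ℝ) (hε : 0 < ε)
    (U : Set ℂ) (hU : IsOpen U) (hball : Metric.closedBall (x₀ : ℂ) ε ⊆ U)
    (g : ℂ → ℂ) (hg : DifferentiableOn ℂ g U) (hinj : Set.InjOn g U)
    (hreal : ∀ x : ℝ, x ∈ Set.Icc (x₀ - ε) (x₀ + ε) → (g (x : ℂ)).im = 0)
    (him : ∀ v ∈ Metric.closedBall (x₀ : ℂ) ε, 0 < v.im → 0 < (g v).im) :
    deriv g (x₀ : ℂ) ≠ 0 := by
  intro hd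
  have hxU : (x₀ : ℂ) ∈ U := hball (by simp [hε.le])
  have hga : AnalyticAt ℂ g x₀ := hg.analyticAt (hU.mem_nhds hxU)
  have hF : AnalyticAt ℂ (fun z => g z - g x₀) (x₀ : ℂ) := hga.sub analyticAt_const
  have hne : ¬ ∀ᶠ z in 𝓝 (x₀ : ℂ), g z - g x₀ = 0 := by
    intro h
    have h2 : ∀ᶠ z in 𝓝[≠] (x₀ : ℂ), g z - g x₀ = 0 ∧ z ∈ U ∧ z ≠ x₀ :=
      (h.filter_mono nhdsWithin_le_nhds).and
        (((hU.eventually_mem hxU).filter_mono nhdsWithin_le_nhds).and self_mem_nhdsWithin)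
    obtain ⟨z, hz, hzU, hzx⟩ := h2.exists
    exact hzx (hinj hzU hxU (sub_eq_zero.mp hz))
  obtain ⟨n, h, hh, hh0, hfac⟩ := hF.exists_eventuallyEq_pow_smul_nonzero_iff.mpr hne
  have hn : 2 ≤ n := by
    by_contra hlt
    have hn01 : n = 0 ∨ n = 1 := by omega
    rcases hn01 with rfl | rfl
    · have := hfac.self_of_nhds
      simp at this
      exact hh0 this.symm
    · have e : deriv (fun z => g z - g x₀) (x₀ : ℂ) = h x₀ := by
        rw [Filter.EventuallyEq.deriv_eq hfac]
        have h1 : HasDerivAt (fun z : ℂ => (z - x₀) ^ 1 • h z)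
            (1 * h x₀ + ((x₀ : ℂ) - x₀) * deriv h x₀) (x₀ : ℂ) := by
          have h2 := ((hasDerivAt_id (x₀ : ℂ)).sub_const (x₀ : ℂ)).mul
            hh.differentiableAt.hasDerivAt
          refine h2.congr_of_eventuallyEq (Filter.Eventually.of_forall fun z => ?_)
          simp
        rw [h1.deriv]; simp
      rw [deriv_sub_const, hd] at e
      exact hh0 e.symm
  have key : ∀ θ : ℝ, 0 ≤ θ → θ < Real.pi →
      0 ≤ (Complex.exp (θ * Complex.I) ^ n * h x₀).im := by
    intro θ h0 hpi
    set u := Complex.exp (θ * Complex.I) with hu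
    have hun : ‖u‖ = 1 := Complex.norm_exp_ofReal_mul_I θ
    have ht : Tendsto (fun t : ℝ => (x₀ : ℂ) + t * u) (𝓝[>] 0) (𝓝 (x₀ : ℂ)) := by
      have : Continuous (fun t : ℝ => (x₀ : ℂ) + t * u) := by fun_prop
      have := this.tendsto 0
      simp only [Complex.ofReal_zero, zero_mul, add_zero] at this
      exact this.mono_left nhdsWithin_le_nhds
    have hlim : Tendsto (fun t : ℝ => (u ^ n * h ((x₀ : ℂ) + t * u)).im) (𝓝[>] 0)
        (𝓝 (u ^ n * h x₀).im) :=
      (Complex.continuous_im.tendsto _).comp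
        (tendsto_const_nhds.mul (hh.continuousAt.tendsto.comp ht))
    refine ge_of_tendsto hlim ?_
    have hev : ∀ᶠ t : ℝ in 𝓝[>] 0, t < ε :=
      (gt_mem_nhds hε).filter_mono nhdsWithin_le_nhds
    filter_upwards [hev, self_mem_nhdsWithin, ht.eventually hfac] with t htε ht0 hft
    have ht0 : 0 < t := ht0
    have hmem : (x₀ : ℂ) + t * u ∈ Metric.closedBall (x₀ : ℂ) ε := by
      simp [dist_eq_norm, hun, abs_of_pos ht0, htε.le]
    have hgx : (g x₀).im = 0 := hreal x₀ ⟨by linarith, by linarith⟩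
    have hpos : 0 ≤ (g ((x₀ : ℂ) + t * u)).im := by
      rcases h0.eq_or_lt with h00 | h00
      · have : u = 1 := by rw [hu, ← h00]; simp
        rw [this]
        have := hreal (x₀ + t) ⟨by linarith, by linarith⟩
        push_cast at this
        simp [this]
      · apply (him _ hmem _).le
        have : u.im = Real.sin θ := Complex.exp_ofReal_mul_I_im θ
        simp [this]
        exact mul_pos ht0 (Real.sin_pos_of_pos_of_lt_pi h00 hpi)
    have e : g ((x₀ : ℂ) + t * u) - g x₀ = ((t ^ n : ℝ) : ℂ) * (u ^ n * h ((x₀ : ℂ) + t * u)) := by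
      rw [hft]; simp [mul_pow]; ring
    have e2 := congrArg Complex.im e
    rw [Complex.im_ofReal_mul, Complex.sub_im, hgx, sub_zero] at e2
    rw [e2] at hpos
    exact nonneg_of_mul_nonneg_right hpos (pow_pos ht0 n)
  have hnR : (2 : ℝ) ≤ n := by exact_mod_cast hn
  have hpi := Real.pi_pos
  have kk : ∀ φ : ℝ, 0 ≤ φ → φ < 2 * Real.pi → 0 ≤ (Complex.exp (φ * Complex.I) * h x₀).im := by
    intro φ h0 h1
    have := key (φ / n) (by positivity) (by
      rw [div_lt_iff₀ (by linarith)]; nlinarith)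
    rw [← Complex.exp_nat_mul] at this
    have e : (n : ℂ) * (((φ / n : ℝ) : ℂ) * Complex.I) = φ * Complex.I := by
      have : (n : ℂ) ≠ 0 := by exact_mod_cast (by omega : n ≠ 0)
      push_cast; field_simp
    rwa [e] at this
  have k : ∀ φ : ℝ, 0 ≤ φ → φ < 2 * Real.pi →
      0 ≤ Real.cos φ * (h x₀).im + Real.sin φ * (h x₀).re := by
    intro φ h0 h1
    have := kk φ h0 h1
    rwa [Complex.mul_im, Complex.exp_ofReal_mul_I_re, Complex.exp_ofReal_mul_I_im] at this
  have k0 := k 0 le_rfl (by linarith)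
  have k1 := k (Real.pi / 2) (by linarith) (by linarith)
  have k2 := k Real.pi (by linarith) (by linarith)
  have k3 := k (Real.pi / 2 + Real.pi) (by linarith) (by linarith)
  rw [Real.cos_add_pi, Real.sin_add_pi] at k3
  simp at k0 k1 k2 k3
  exact hh0 (Complex.ext (le_antisymm k3 k1) (le_antisymm k2 k0))

open Filter Topology in
/-- Schwarz reflection symmetry. -/
lemma green_aux_conj (x₀ : ℝ) (ε : ℝ) (hε : 0 < ε)
    (U : Set ℂ) (hU : IsOpen U) (hball : Metric.closedBall (x₀ : ℂ) ε ⊆ U)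
    (g : ℂ → ℂ) (hg : DifferentiableOn ℂ g U)
    (hreal : ∀ x : ℝ, x ∈ Set.Icc (x₀ - ε) (x₀ + ε) → (g (x : ℂ)).im = 0)
    (z : ℂ) (hz : z ∈ Metric.closedBall (x₀ : ℂ) ε) :
    g ((starRingEnd ℂ) z) = (starRingEnd ℂ) (g z) := by
  have hcb : ∀ w ∈ Metric.closedBall (x₀ : ℂ) ε,
      (starRingEnd ℂ) w ∈ Metric.closedBall (x₀ : ℂ) ε := by
    intro w hw
    rw [Metric.mem_closedBall, Complex.dist_conj_comm, Complex.conj_ofReal]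
    exact hw
  set k : ℂ → ℂ := (starRingEnd ℂ) ∘ g ∘ (starRingEnd ℂ) with hk
  have hkd : ∀ w ∈ Metric.closedBall (x₀ : ℂ) ε, DifferentiableAt ℂ k w := by
    intro w hw
    have := (hg.differentiableAt (hU.mem_nhds (hball (hcb w hw)))).conj_conj
    rwa [Complex.conj_conj] at this
  have hgd : ∀ w ∈ Metric.closedBall (x₀ : ℂ) ε, DifferentiableAt ℂ g w :=
    fun w hw => hg.differentiableAt (hU.mem_nhds (hball hw))
  have hsub := Metric.ball_subset_closedBall (x := (x₀ : ℂ)) (ε := ε)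
  have hA : AnalyticOnNhd ℂ g (Metric.ball (x₀ : ℂ) ε) :=
    DifferentiableOn.analyticOnNhd (fun w hw => (hgd w (hsub hw)).differentiableWithinAt)
      Metric.isOpen_ball
  have hB : AnalyticOnNhd ℂ k (Metric.ball (x₀ : ℂ) ε) :=
    DifferentiableOn.analyticOnNhd (fun w hw => (hkd w (hsub hw)).differentiableWithinAt)
      Metric.isOpen_ball
  have hfreq : ∃ᶠ w in 𝓝[≠] (x₀ : ℂ), g w = k w := by
    have ht : Tendsto (fun t : ℝ => ((x₀ + t : ℝ) : ℂ)) (𝓝[>] 0) (𝓝[≠] (x₀ : ℂ)) := by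
      refine tendsto_nhdsWithin_iff.mpr ⟨?_, ?_⟩
      · have : Continuous (fun t : ℝ => ((x₀ + t : ℝ) : ℂ)) := by fun_prop
        have := this.tendsto 0
        rw [add_zero] at this
        exact this.mono_left nhdsWithin_le_nhds
      · filter_upwards [self_mem_nhdsWithin] with t ht
        have ht : 0 < t := ht
        simp [ht.ne']
    refine ht.frequently (Eventually.frequently ?_)
    have hev : ∀ᶠ t : ℝ in 𝓝[>] 0, t < ε :=
      (gt_mem_nhds hε).filter_mono nhdsWithin_le_nhds
    filter_upwards [hev, self_mem_nhdsWithin] with t h1 h2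
    have h2 : 0 < t := h2
    have := hreal (x₀ + t) ⟨by linarith, by linarith⟩
    simp only [hk, Function.comp_apply, Complex.conj_ofReal]
    exact (Complex.conj_eq_iff_im.mpr this).symm
  have heq : Set.EqOn g k (Metric.ball (x₀ : ℂ) ε) :=
    hA.eqOn_of_preconnected_of_frequently_eq hB (convex_ball _ _).isPreconnected
      (Metric.mem_ball_self hε) hfreq
  have heq2 : Set.EqOn g k (Metric.closedBall (x₀ : ℂ) ε) := by
    refine heq.of_subset_closure (fun w hw => (hgd w hw).continuousAt.continuousWithinAt)
      (fun w hw => (hkd w hw).continuousAt.continuousWithinAt) hsub ?_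
    rw [closure_ball _ hε.ne']
  have := heq2 (hcb z hz)
  simpa [hk] using this

/-- Boundary variance computation from the proof of Lemma 6.4: if `g` is
holomorphic and injective on an open set containing `closedBall x₀ ε`
(`x₀ ∈ ℝ`), maps `[x₀−ε, x₀+ε]` into `ℝ` and the upper part of the ball into
`ℍ`, then the average of `G(g(x₀), g(·))` on the upper semicircle
`∂B_ε(x₀) ∩ ℍ` equals `−2 log ε − 2 log|g'(x₀)|`. -/
theorem green_selfavg_boundary (x₀ : ℝ) (ε : ℝ) (hε : 0 < ε)
    (U : Set ℂ) (hU : IsOpen U) (hball : Metric.closedBall (x₀ : ℂ) ε ⊆ U)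
    (g : ℂ → ℂ) (hg : DifferentiableOn ℂ g U) (hinj : Set.InjOn g U)
    (hreal : ∀ x : ℝ, x ∈ Set.Icc (x₀ - ε) (x₀ + ε) → (g (x : ℂ)).im = 0)
    (him : ∀ v ∈ Metric.closedBall (x₀ : ℂ) ε, 0 < v.im → 0 < (g v).im) :
    (1 / Real.pi) * ∫ θ in (0:ℝ)..Real.pi,
        greenG (g (x₀ : ℂ)) (g ((x₀ : ℂ) + (ε : ℂ) * Complex.exp ((θ : ℂ) * Complex.I)))
      = -2 * Real.log ε - 2 * Real.log ‖deriv g (x₀ : ℂ)‖ := by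
  have hxU : (x₀ : ℂ) ∈ U := hball (by simp [hε.le])
  have hd := green_aux_deriv_ne_zero x₀ ε hε U hU hball g hg hinj hreal him
  have hgx : (g x₀).im = 0 := hreal x₀ ⟨by linarith, by linarith⟩
  have hgxc : (starRingEnd ℂ) (g x₀) = g x₀ := Complex.conj_eq_iff_im.mpr hgx
  set h := dslope g (x₀ : ℂ) with hh
  have hhd : DifferentiableOn ℂ h U :=
    (Complex.differentiableOn_dslope (hU.mem_nhds hxU)).mpr hg
  have hhA : AnalyticOnNhd ℂ h (Metric.closedBall (x₀ : ℂ) |ε|) := by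
    rw [abs_of_pos hε]
    exact (hhd.analyticOnNhd hU).mono hball
  have hhne : ∀ u ∈ Metric.closedBall (x₀ : ℂ) |ε|, h u ≠ 0 := by
    rw [abs_of_pos hε]
    intro u hu
    by_cases hux : u = x₀
    · rw [hux, hh, dslope_same]; exact hd
    · rw [hh, dslope_of_ne _ hux, slope_def_module]
      refine smul_ne_zero (inv_ne_zero (sub_ne_zero.mpr hux)) (sub_ne_zero.mpr ?_)
      exact fun e => hux (hinj (hball hu) hxU e)
  have havg := hhA.circleAverage_log_norm_of_ne_zero hhne
  have hcircle : ∀ θ : ℝ, circleMap (x₀ : ℂ) ε θ ∈ Metric.closedBall (x₀ : ℂ) ε :=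
    fun θ => circleMap_mem_closedBall _ hε.le θ
  have hcne : ∀ θ : ℝ, circleMap (x₀ : ℂ) ε θ ≠ x₀ := fun θ => circleMap_ne_center hε.ne'
  have hnorm : ∀ θ : ℝ, ‖g x₀ - g (circleMap (x₀ : ℂ) ε θ)‖
      = ε * ‖h (circleMap (x₀ : ℂ) ε θ)‖ := by
    intro θ
    have e := sub_smul_dslope g (x₀ : ℂ) (circleMap (x₀ : ℂ) ε θ)
    rw [norm_sub_rev, ← e, norm_smul, circleMap_sub_center, norm_circleMap_zero, abs_of_pos hε]
  set F : ℝ → ℝ := fun θ => Real.log ‖h (circleMap (x₀ : ℂ) ε θ)‖ with hF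
  have hgreen : ∀ θ : ℝ, greenG (g (x₀ : ℂ))
      (g ((x₀ : ℂ) + (ε : ℂ) * Complex.exp ((θ : ℂ) * Complex.I)))
      = -2 * Real.log ε - 2 * F θ := by
    intro θ
    change greenG (g (x₀ : ℂ)) (g (circleMap (x₀ : ℂ) ε θ)) = _
    have e : ‖g x₀ - (starRingEnd ℂ) (g (circleMap (x₀ : ℂ) ε θ))‖
        = ‖g x₀ - g (circleMap (x₀ : ℂ) ε θ)‖ := by
      rw [← Complex.norm_conj, map_sub, Complex.conj_conj, hgxc]
    have hpos : ‖h (circleMap (x₀ : ℂ) ε θ)‖ ≠ 0 :=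
      norm_ne_zero_iff.mpr (hhne _ (by rw [abs_of_pos hε]; exact hcircle θ))
    rw [greenG, e, hnorm, Real.log_mul hε.ne' hpos, hF]
    ring
  have hFcont : Continuous F := by
    rw [continuous_iff_continuousAt]
    intro θ
    have hm : circleMap (x₀ : ℂ) ε θ ∈ Metric.closedBall (x₀ : ℂ) |ε| := by
      rw [abs_of_pos hε]; exact hcircle θ
    have h1 : ContinuousAt (fun θ => h (circleMap (x₀ : ℂ) ε θ)) θ :=
      ContinuousAt.comp (f := circleMap (x₀ : ℂ) ε) (g := h)
        (hhA _ hm).continuousAt (continuous_circleMap _ _).continuousAt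
    exact h1.norm.log (norm_ne_zero_iff.mpr (hhne _ hm))
  have hsymm : ∀ θ : ℝ, F (2 * Real.pi - θ) = F θ := by
    intro θ
    have e : circleMap (x₀ : ℂ) ε (2 * Real.pi - θ)
        = (starRingEnd ℂ) (circleMap (x₀ : ℂ) ε θ) := by
      simp only [circleMap, map_add, map_mul, Complex.conj_ofReal, ← Complex.exp_conj,
        Complex.conj_I]
      congr 2
      rw [Complex.exp_eq_exp_iff_exists_int]
      exact ⟨1, by push_cast; ring⟩
    have hn : ‖g x₀ - g (circleMap (x₀ : ℂ) ε (2 * Real.pi - θ))‖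
        = ‖g x₀ - g (circleMap (x₀ : ℂ) ε θ)‖ := by
      rw [e, green_aux_conj x₀ ε hε U hU hball g hg hreal _ (hcircle θ)]
      rw [← Complex.norm_conj, map_sub, Complex.conj_conj, hgxc]
    rw [hnorm, hnorm] at hn
    simp only [hF]
    rw [mul_left_cancel₀ hε.ne' hn]
  have hhalf : ∫ θ in Real.pi..(2 * Real.pi), F θ = ∫ θ in (0:ℝ)..Real.pi, F θ := by
    have := intervalIntegral.integral_comp_sub_left F (a := 0) (b := Real.pi) (2 * Real.pi)
    simp only [hsymm] at this
    rw [this]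
    congr 1 <;> ring
  have hadd := intervalIntegral.integral_add_adjacent_intervals
    (hFcont.intervalIntegrable 0 Real.pi) (hFcont.intervalIntegrable Real.pi (2 * Real.pi))
    (μ := MeasureTheory.volume)
  have hpi := Real.pi_pos
  have hx : h x₀ = deriv g x₀ := dslope_same g _
  rw [Real.circleAverage_def, smul_eq_mul, hx] at havg
  change (2 * Real.pi)⁻¹ * ∫ θ in (0:ℝ)..(2 * Real.pi), F θ = _ at havg
  simp only [hgreen]
  have hi2 : IntervalIntegrable (fun θ => 2 * F θ) MeasureTheory.volume 0 Real.pi :=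
    (continuous_const.mul hFcont).intervalIntegrable _ _
  rw [intervalIntegral.integral_sub (by simp) hi2,
    intervalIntegral.integral_const, intervalIntegral.integral_const_mul, ← havg, ← hadd, hhalf,
    smul_eq_mul]
  field_simp
  ring
end

section
/- Let z₁, z₂ ∈ ℂ and ε > 0 with |z₁ − z₂| > 2ε, let U ⊆ ℂ be an open set containing the closed balls of radius ε around z₁ and around z₂, and let g : ℂ → ℂ be holomorphic and injective on U with Im(g(v)) > 0 for every v in either closed ball. Then (1/(2π))² ∫_{θ=0}^{2π} ∫_{φ=0}^{2π} G(g(z₁ + ε·exp(iθ)), g(z₂ + ε·exp(iφ))) dφ dθ = G(g(z₁), g(z₂)). -/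
theorem greenG_symm' (z w : ℂ) : greenG z w = greenG w z := by
  unfold greenG
  have h : ‖z - (starRingEnd ℂ) w‖ = ‖w - (starRingEnd ℂ) z‖ := by
    rw [← Complex.norm_conj (z - (starRingEnd ℂ) w), map_sub, Complex.conj_conj, norm_sub_rev]
  rw [norm_sub_rev z w, h]

theorem greenG_avg (c : ℂ) (R : ℝ) (hR : 0 < R) (g : ℂ → ℂ) (w : ℂ)
    (hg : AnalyticOnNhd ℂ g (Metric.closedBall c R))
    (hne : ∀ v ∈ Metric.closedBall c R, g v ≠ w)
    (him : ∀ v ∈ Metric.closedBall c R, 0 < (g v).im) (hw : 0 < w.im) :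
    Real.circleAverage (fun v => greenG (g v) w) c R = greenG (g c) w := by
  have hR' : |R| = R := abs_of_pos hR
  have key : ∀ a : ℂ, (∀ v ∈ Metric.closedBall c R, g v ≠ a) →
      CircleIntegrable (fun v => Real.log ‖g v - a‖) c R ∧
      Real.circleAverage (fun v => Real.log ‖g v - a‖) c R = Real.log ‖g c - a‖ := by
    intro a ha
    have han : AnalyticOnNhd ℂ (fun v => g v - a) (Metric.closedBall c R) :=
      fun v hv => (hg v hv).sub analyticAt_const
    constructor
    · apply ContinuousOn.circleIntegrable hR.le
      have hc : ContinuousOn (fun v => g v - a) (Metric.sphere c R) :=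
        han.continuousOn.mono Metric.sphere_subset_closedBall
      refine ContinuousOn.log hc.norm ?_
      intro v hv
      exact norm_ne_zero_iff.mpr (sub_ne_zero.mpr (ha v (Metric.sphere_subset_closedBall hv)))
    · apply AnalyticOnNhd.circleAverage_log_norm_of_ne_zero (g := fun v => g v - a)
      · rw [hR']; exact han
      · intro u
        first
        | (intro hu; rw [hR'] at hu; exact sub_ne_zero.mpr (ha u hu))
        | (have hu := u.2; exact sub_ne_zero.mpr (ha _ (by simpa [hR'] using hu)))
  obtain ⟨i1, e1⟩ := key w hne
  obtain ⟨i2, e2⟩ := key ((starRingEnd ℂ) w) (by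
    intro v hv h
    have := him v hv
    rw [h, Complex.conj_im] at this
    linarith)
  have : (fun v => greenG (g v) w) = fun v =>
      (-1 : ℝ) • (Real.log ‖g v - w‖ + Real.log ‖g v - (starRingEnd ℂ) w‖) := by
    funext v; simp only [greenG, smul_eq_mul]; ring
  rw [this, Real.circleAverage_fun_smul, Real.circleAverage_fun_add i1 i2, e1, e2]
  simp only [greenG, smul_eq_mul]; ring

/-- Cross-term computation from the proof of Lemma 6.4: if `g` is holomorphic
and injective on an open set containing the disjoint closed balls
`closedBall z₁ ε` and `closedBall z₂ ε` (with `|z₁ − z₂| > 2ε`), and maps both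
closed balls into `ℍ`, then the double average of `G(g(·), g(·))` over the two
circles `∂B_ε(z₁)`, `∂B_ε(z₂)` equals `G(g(z₁), g(z₂))`. -/
theorem green_crossavg (z₁ z₂ : ℂ) (ε : ℝ) (hε : 0 < ε)
    (hsep : 2 * ε < ‖z₁ - z₂‖)
    (U : Set ℂ) (hU : IsOpen U)
    (hball₁ : Metric.closedBall z₁ ε ⊆ U) (hball₂ : Metric.closedBall z₂ ε ⊆ U)
    (g : ℂ → ℂ) (hg : DifferentiableOn ℂ g U) (hinj : Set.InjOn g U)
    (him₁ : ∀ v ∈ Metric.closedBall z₁ ε, 0 < (g v).im)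
    (him₂ : ∀ v ∈ Metric.closedBall z₂ ε, 0 < (g v).im) :
    (1 / (2 * Real.pi)) ^ 2 * ∫ θ in (0:ℝ)..(2 * Real.pi),
        ∫ φ in (0:ℝ)..(2 * Real.pi),
          greenG (g (z₁ + (ε : ℂ) * Complex.exp ((θ : ℂ) * Complex.I)))
            (g (z₂ + (ε : ℂ) * Complex.exp ((φ : ℂ) * Complex.I)))
      = greenG (g z₁) (g z₂) := by
  have ha : AnalyticOnNhd ℂ g U := hg.analyticOnNhd hU
  have hdisj : ∀ v ∈ Metric.closedBall z₁ ε, ∀ w ∈ Metric.closedBall z₂ ε, g v ≠ g w := by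
    intro v hv w hw h
    have := hinj (hball₁ hv) (hball₂ hw) h
    subst this
    rw [Metric.mem_closedBall, dist_eq_norm] at hv hw
    have h3 := norm_sub_le (v - z₂) (v - z₁)
    rw [sub_sub_sub_cancel_left] at h3
    linarith
  have inner : ∀ v ∈ Metric.closedBall z₁ ε,
      Real.circleAverage (fun w => greenG (g v) (g w)) z₂ ε = greenG (g v) (g z₂) := by
    intro v hv
    simp_rw [greenG_symm' (g v)]
    exact greenG_avg z₂ ε hε g (g v) (ha.mono hball₂)
      (fun w hw h => hdisj v hv w hw h.symm) him₂ (him₁ v hv)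
  have outer := greenG_avg z₁ ε hε g (g z₂) (ha.mono hball₁)
      (fun v hv => hdisj v hv z₂ (Metric.mem_closedBall_self hε.le)) him₁
      (him₂ z₂ (Metric.mem_closedBall_self hε.le))
  rw [← outer]
  have e : Real.circleAverage (fun v => greenG (g v) (g z₂)) z₁ ε
      = Real.circleAverage (fun v =>
          Real.circleAverage (fun w => greenG (g v) (g w)) z₂ ε) z₁ ε := by
    apply Real.circleAverage_congr_sphere
    intro v hv
    rw [abs_of_pos hε] at hv
    exact (inner v (Metric.sphere_subset_closedBall hv)).symm
  rw [e]
  simp only [Real.circleAverage_def, circleMap, smul_eq_mul,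
    intervalIntegral.integral_const_mul]
  ring
end

section
/- Let Z₁, Z₂ : ℝ → ℂ, let t₀ ∈ ℝ and w ∈ ℝ. Suppose Z₁ has derivative −2/(Z₁(t₀) − w) at t₀ and Z₂ has derivative −2/(Z₂(t₀) − w) at t₀ (as functions from ℝ to ℂ), and that Z₁(t₀) ≠ w, Z₂(t₀) ≠ w, Z₁(t₀) ≠ Z₂(t₀), and Z₁(t₀) ≠ conj(Z₂(t₀)). Then the function t ↦ −log|Z₁(t) − Z₂(t)| − log|Z₁(t) − conj(Z₂(t))| has derivative −4·Re(1/(Z₁(t₀) − w))·Re(1/(Z₂(t₀) − w)) at t₀. -/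
theorem hasDerivAt_log_norm_aux {f : ℝ → ℂ} {f' : ℂ} {t : ℝ} (h : HasDerivAt f f' t)
    (h0 : f t ≠ 0) : HasDerivAt (fun s => Real.log ‖f s‖) (f' / f t).re t := by
  have hn : ‖f t‖ ^ 2 ≠ 0 := by simpa using h0
  have h1 := (h.norm_sq.log hn).div_const 2
  have e : (fun s => Real.log ‖f s‖) = fun s => Real.log (‖f s‖ ^ 2) / 2 := by
    funext s
    rw [Real.log_pow]
    push_cast
    ring
  rw [e]
  refine h1.congr_deriv ?_
  rw [Complex.div_re, Complex.inner, Complex.normSq_eq_norm_sq]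
  simp only [Complex.mul_re, Complex.conj_re, Complex.conj_im]
  field_simp
  ring

/-- Identity `dG(Z_j, Z_k) = −4 Re(1/(Z_j − W)) Re(1/(Z_k − W)) dt` from the
proof of Lemma 3.1: if `Z₁, Z₂` follow the reverse Loewner flow
`dZ = −2 dt/(Z − w)` at time `t₀` (with real driving value `w`), and
`Z₁(t₀) ≠ w`, `Z₂(t₀) ≠ w`, `Z₁(t₀) ≠ Z₂(t₀)`, `Z₁(t₀) ≠ conj(Z₂(t₀))`, then
`t ↦ −log|Z₁ − Z₂| − log|Z₁ − conj Z₂|` has the stated derivative at `t₀`. -/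
theorem green_two_points_deriv (Z₁ Z₂ : ℝ → ℂ) (t₀ w : ℝ)
    (h₁ : HasDerivAt Z₁ (-2 / (Z₁ t₀ - (w : ℂ))) t₀)
    (h₂ : HasDerivAt Z₂ (-2 / (Z₂ t₀ - (w : ℂ))) t₀)
    (hw₁ : Z₁ t₀ ≠ (w : ℂ)) (hw₂ : Z₂ t₀ ≠ (w : ℂ))
    (hne : Z₁ t₀ ≠ Z₂ t₀) (hne' : Z₁ t₀ ≠ (starRingEnd ℂ) (Z₂ t₀)) :
    HasDerivAt (fun t => -Real.log ‖Z₁ t - Z₂ t‖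
        - Real.log ‖Z₁ t - (starRingEnd ℂ) (Z₂ t)‖)
      (-4 * (1 / (Z₁ t₀ - (w : ℂ))).re * (1 / (Z₂ t₀ - (w : ℂ))).re) t₀ := by
  have hc : HasDerivAt (fun t => (starRingEnd ℂ) (Z₂ t))
      ((starRingEnd ℂ) (-2 / (Z₂ t₀ - (w : ℂ)))) t₀ := h₂.star
  have a := hasDerivAt_log_norm_aux (h₁.fun_sub h₂) (sub_ne_zero.2 hne)
  have b := hasDerivAt_log_norm_aux (h₁.fun_sub hc) (sub_ne_zero.2 hne')
  refine (a.fun_neg.fun_sub b).congr_deriv ?_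
  have hA := sub_ne_zero.2 hw₁
  have hB := sub_ne_zero.2 hw₂
  have hB' : (starRingEnd ℂ) (Z₂ t₀) - (w : ℂ) ≠ 0 := by
    have := (map_ne_zero (starRingEnd ℂ)).2 hB
    simpa using this
  have hD := sub_ne_zero.2 hne
  have hD' := sub_ne_zero.2 hne'
  have e1 : (-2 / (Z₁ t₀ - (w : ℂ)) - -2 / (Z₂ t₀ - (w : ℂ))) / (Z₁ t₀ - Z₂ t₀)
      = 2 * ((1 / (Z₁ t₀ - (w : ℂ))) * (1 / (Z₂ t₀ - (w : ℂ)))) := by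
    field_simp
    ring
  have e2 : (-2 / (Z₁ t₀ - (w : ℂ)) - (starRingEnd ℂ) (-2 / (Z₂ t₀ - (w : ℂ))))
        / (Z₁ t₀ - (starRingEnd ℂ) (Z₂ t₀))
      = 2 * ((1 / (Z₁ t₀ - (w : ℂ))) * (starRingEnd ℂ) (1 / (Z₂ t₀ - (w : ℂ)))) := by
    simp only [map_div₀, map_sub, map_neg, map_one, map_ofNat, Complex.conj_ofReal]
    field_simp
    ring
  rw [e1, e2]
  generalize 1 / (Z₁ t₀ - (w : ℂ)) = x
  generalize 1 / (Z₂ t₀ - (w : ℂ)) = y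
  simp only [Complex.mul_re, Complex.mul_im, Complex.conj_re, Complex.conj_im,
    Complex.re_ofNat, Complex.im_ofNat]
  ring
end
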